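/- arXiv:2306.16183 — 3 statements merged into one kernel-verified Lean document; each statement's English description precedes it below -/
import Mathlib

section
/- Let n ≥ 1, r ∈ (0,1], and s > 0, and let Ω ⊆ ℝⁿ be a convex open set. There exists a constant C depending only on n, r, s such that for every nonnegative F ∈ F^s(Ω), the function F^r belongs to F^{rs}(Ω) and ‖F^r‖_{C^{rs}(Ω)} ≤ ‖F^r‖_{F^{rs}(Ω)} ≤ C · ‖F‖_{F^s(Ω)}^r. -/
open Set ENNReal
open scoped NNReal

noncomputable section

/-- The largest integer strictly less than `s` (for `s > 0`). -/
def lowFloor (s : ℝ) : ℕ := ⌈s⌉₊ - 1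

variable {E : Type*} [NormedAddCommGroup E] [NormedSpace ℝ E]

/-- `max_{0 ≤ m < s} sup_{x ∈ Ω} |∇^m F(x)|`, valued in `ℝ≥0∞`. -/
def derivSup (s : ℝ) (Ω : Set E) (F : E → ℝ) : ℝ≥0∞ :=
  ⨆ (m : ℕ) (_ : m ≤ lowFloor s) (x : E) (_ : x ∈ Ω),
    (‖iteratedFDerivWithin ℝ m F Ω x‖₊ : ℝ≥0∞)

/-- The homogeneous Hölder seminorm `‖F‖_{Ċ^s(Ω)}`, valued in `ℝ≥0∞`. -/
def holderSemi (s : ℝ) (Ω : Set E) (F : E → ℝ) : ℝ≥0∞ :=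
  ⨆ (x : E) (_ : x ∈ Ω) (y : E) (_ : y ∈ Ω) (_ : x ≠ y),
    (‖iteratedFDerivWithin ℝ (lowFloor s) F Ω x
        - iteratedFDerivWithin ℝ (lowFloor s) F Ω y‖₊ : ℝ≥0∞)
      / ENNReal.ofReal (‖x - y‖ ^ (s - (lowFloor s : ℝ)))

/-- The Hölder norm `‖F‖_{C^s(Ω)}`, valued in `ℝ≥0∞`. -/
def csNorm (s : ℝ) (Ω : Set E) (F : E → ℝ) : ℝ≥0∞ :=
  derivSup s Ω F + holderSemi s Ω F

/-- Membership in `C^s(Ω)`. -/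
def MemCs (s : ℝ) (Ω : Set E) (F : E → ℝ) : Prop :=
  ContDiffOn ℝ (lowFloor s : ℕ∞) F Ω ∧ csNorm s Ω F ≠ ∞

/-- The flat seminorm `‖F‖_{Ḟ^s(Ω)}`, valued in `ℝ≥0∞`.  (In `ℝ≥0∞` one has
`0/0 = 0` and `a/0 = ∞` for `a ≠ 0`, matching the paper's conventions; for
`0 < s < 1` the supremum is empty, hence `0`.) -/
def flatSemi (s : ℝ) (Ω : Set E) (F : E → ℝ) : ℝ≥0∞ :=
  ⨆ (m : ℕ) (_ : 1 ≤ m) (_ : m ≤ lowFloor s) (x : E) (_ : x ∈ Ω),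
    ((‖iteratedFDerivWithin ℝ m F Ω x‖₊ : ℝ≥0∞) ^ s
      / ENNReal.ofReal (F x) ^ (s - (m : ℝ))) ^ (1 / (m : ℝ))

/-- Membership in the cone `F^s(Ω)`. -/
def MemFs (s : ℝ) (Ω : Set E) (F : E → ℝ) : Prop :=
  MemCs s Ω F ∧ (∀ x ∈ Ω, 0 ≤ F x) ∧ flatSemi s Ω F ≠ ∞

/-- The norm `‖F‖_{F^s(Ω)} = ‖F‖_{C^s(Ω)} + ‖F‖_{Ḟ^s(Ω)}`. -/
def fsNorm (s : ℝ) (Ω : Set E) (F : E → ℝ) : ℝ≥0∞ :=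
  csNorm s Ω F + flatSemi s Ω F

/-- `sup_{x ∈ Ω} |F(x)|`, valued in `ℝ≥0∞`. -/
def supNormSet (Ω : Set E) (F : E → ℝ) : ℝ≥0∞ :=
  ⨆ (x : E) (_ : x ∈ Ω), (‖F x‖₊ : ℝ≥0∞)

/-- `P` is (the function given by) a polynomial of degree at most `D`. -/
def IsPolyDeg (D : ℕ) (P : E → ℝ) : Prop :=
  ContDiff ℝ (⊤ : ℕ∞) P ∧ ∀ x, iteratedFDeriv ℝ (D + 1) P x = 0

/-- The degree-`D` Taylor polynomial (jet) of `F` at `x`, as a function. -/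
def jetAt (D : ℕ) (F : E → ℝ) (x : E) : E → ℝ :=
  fun y => ∑ m ∈ Finset.range (D + 1),
    (iteratedFDeriv ℝ m F x fun _ => y - x) / m.factorial

/-- The degree-`D` Taylor polynomial of `F` at `x` using derivatives within `Ω`. -/
def jetWithinAt (D : ℕ) (F : E → ℝ) (Ω : Set E) (x : E) : E → ℝ :=
  fun y => ∑ m ∈ Finset.range (D + 1),
    (iteratedFDerivWithin ℝ m F Ω x fun _ => y - x) / m.factorial

/-- The pointwise flatness quantity `max_{1≤m<s} (|∇^m P(x)|^s / P(x)^{s-m})^{1/m}`. -/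
def jetFlatAt (s : ℝ) (P : E → ℝ) (x : E) : ℝ≥0∞ :=
  ⨆ (m : ℕ) (_ : 1 ≤ m) (_ : m ≤ lowFloor s),
    ((‖iteratedFDeriv ℝ m P x‖₊ : ℝ≥0∞) ^ s
      / ENNReal.ofReal (P x) ^ (s - (m : ℝ))) ^ (1 / (m : ℝ))

/-- The set `Γ(x₀, M)` of flat nonnegative jets. -/
def Gamma (s : ℝ) (x₀ : E) (M : ℝ) : Set (E → ℝ) :=
  {P | IsPolyDeg (lowFloor s) P ∧ 0 ≤ P x₀ ∧
    (∀ m ≤ lowFloor s, ‖iteratedFDeriv ℝ m P x₀‖ ≤ M) ∧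
    jetFlatAt s P x₀ ≤ ENNReal.ofReal M}

/-- `‖P⃗‖_{J C^s(E)}` for a family of jets `P : E → (E → ℝ)`. -/
def jetCNorm (s : ℝ) (Eset : Set E) (P : E → E → ℝ) : ℝ≥0∞ :=
  (⨆ (x : E) (_ : x ∈ Eset) (m : ℕ) (_ : m ≤ lowFloor s),
      (‖iteratedFDeriv ℝ m (P x) x‖₊ : ℝ≥0∞))
  + ⨆ (x : E) (_ : x ∈ Eset) (y : E) (_ : y ∈ Eset) (_ : x ≠ y)
      (m : ℕ) (_ : m ≤ lowFloor s),
      (‖iteratedFDeriv ℝ m (P x - P y) y‖₊ : ℝ≥0∞)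
        / ENNReal.ofReal (‖x - y‖ ^ (s - (m : ℝ)))

/-- `‖P⃗‖_{J Ḟ^s(E)}` for a family of jets. -/
def jetFlatNorm (s : ℝ) (Eset : Set E) (P : E → E → ℝ) : ℝ≥0∞ :=
  ⨆ (x : E) (_ : x ∈ Eset) (m : ℕ) (_ : 1 ≤ m) (_ : m ≤ lowFloor s),
    ((‖iteratedFDeriv ℝ m (P x) x‖₊ : ℝ≥0∞) ^ s
      / ENNReal.ofReal |P x x| ^ (s - (m : ℝ))) ^ (1 / (m : ℝ))

/-- `‖P⃗‖_{J F^s(E)}`. -/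
def jetFsNorm (s : ℝ) (Eset : Set E) (P : E → E → ℝ) : ℝ≥0∞ :=
  jetCNorm s Eset P + jetFlatNorm s Eset P

/-- The trace norm `‖f‖_{F^s(S)}` (with `inf ∅ = ∞`). -/
def traceNorm (s : ℝ) (S : Set E) (f : E → ℝ) : ℝ≥0∞ :=
  ⨅ (F : E → ℝ) (_ : MemFs s (univ : Set E) F ∧ ∀ x ∈ S, F x = f x),
    fsNorm s (univ : Set E) F


theorem OrderedFinpartition.sum_partSize {n : ℕ} (c : OrderedFinpartition n) :
    ∑ i, c.partSize i = n := by
  simpa using Fintype.card_congr c.equivSigma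

theorem OrderedFinpartition.compAlongOrderedFinpartition_smul {n : ℕ} (c : OrderedFinpartition n)
    (f : ℝ [×c.length]→L[ℝ] ℝ) (g : ∀ i, E [×c.partSize i]→L[ℝ] ℝ)
    (a : ℝ) (b : Fin c.length → ℝ) :
    c.compAlongOrderedFinpartition (a • f) (fun i => b i • g i) =
      (a * ∏ i, b i) • c.compAlongOrderedFinpartition f g := by
  have h := (c.compAlongOrderedFinpartitionL ℝ E ℝ ℝ (a • f)).map_smul_univ b g
  rw [map_smul] at h
  simp only [smul_apply,
    OrderedFinpartition.compAlongOrderedFinpartitionL_apply] at h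
  rw [mul_comm, mul_smul, ← h]
  rfl

theorem FormalMultilinearSeries.taylorComp_rescale (p : FormalMultilinearSeries ℝ ℝ ℝ)
    (q : FormalMultilinearSeries ℝ E ℝ) {A D R : ℝ} (hA : 0 < A) (hD : 0 < D) (hR : 0 < R)
    (n : ℕ) :
    FormalMultilinearSeries.taylorComp (fun j => (A ^ j / R) • p j)
        (fun i => (A * D ^ i)⁻¹ • q i) n = (R * D ^ n)⁻¹ • p.taylorComp q n := by
  simp only [FormalMultilinearSeries.taylorComp, Finset.smul_sum]
  refine Finset.sum_congr rfl fun c _ => ?_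
  refine (c.compAlongOrderedFinpartition_smul (p c.length) (fun i => q (c.partSize i))
    (A ^ c.length / R) (fun i => (A * D ^ c.partSize i)⁻¹)).trans ?_
  refine congrArg (fun a : ℝ => a • p.compAlongOrderedFinpartition q c) ?_
  rw [Finset.prod_inv_distrib, Finset.prod_mul_distrib, Finset.prod_pow_eq_pow_sum,
    c.sum_partSize]
  simp only [Finset.prod_const, Finset.card_univ, Fintype.card_fin]
  field_simp

theorem exists_norm_taylorComp_sub_le_of_le (E : Type*) [NormedAddCommGroup E] [NormedSpace ℝ E]
    (n : ℕ) (B : ℝ) :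
    ∃ C : ℝ, 0 ≤ C ∧ ∀ (p₁ p₂ : FormalMultilinearSeries ℝ ℝ ℝ)
      (q₁ q₂ : FormalMultilinearSeries ℝ E ℝ) (θ : ℝ), 0 ≤ θ →
      (∀ j ≤ n, ‖p₁ j‖ ≤ B) → (∀ j ≤ n, ‖p₁ j - p₂ j‖ ≤ B * θ) →
      (∀ i ≤ n, ‖q₁ i‖ ≤ B) → (∀ i ≤ n, ‖q₂ i‖ ≤ B) → (∀ i ≤ n, ‖q₁ i - q₂ i‖ ≤ B * θ) →
      ‖p₁.taylorComp q₁ n - p₂.taylorComp q₂ n‖ ≤ C * θ := by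
  let α := {a : (FormalMultilinearSeries ℝ ℝ ℝ × FormalMultilinearSeries ℝ ℝ ℝ) ×
    (FormalMultilinearSeries ℝ E ℝ × FormalMultilinearSeries ℝ E ℝ) × ℝ //
      0 ≤ a.2.2 ∧ (∀ j ≤ n, ‖a.1.1 j‖ ≤ B) ∧ (∀ j ≤ n, ‖a.1.1 j - a.1.2 j‖ ≤ B * a.2.2) ∧
      (∀ i ≤ n, ‖a.2.1.1 i‖ ≤ B) ∧ (∀ i ≤ n, ‖a.2.1.2 i‖ ≤ B) ∧
      (∀ i ≤ n, ‖a.2.1.1 i - a.2.1.2 i‖ ≤ B * a.2.2)}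
  have key : (fun a : α => a.1.1.1.taylorComp a.1.2.1.1 n - a.1.1.2.taylorComp a.1.2.1.2 n)
      =O[⊤] (fun a : α => a.1.2.2) := by
    apply FormalMultilinearSeries.taylorComp_sub_taylorComp_isBigO
    · exact fun k hk => Filter.isBoundedUnder_of ⟨B, fun a => a.2.2.1 k hk⟩
    · refine fun k hk => Asymptotics.IsBigO.of_bound B (.of_forall fun a => ?_)
      rw [Real.norm_of_nonneg a.2.1]; exact a.2.2.2.1 k hk
    · exact fun k hk => Filter.isBoundedUnder_of ⟨B, fun a => a.2.2.2.2.1 k hk⟩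
    · exact fun k hk => Filter.isBoundedUnder_of ⟨B, fun a => a.2.2.2.2.2.1 k hk⟩
    · refine fun k hk => Asymptotics.IsBigO.of_bound B (.of_forall fun a => ?_)
      rw [Real.norm_of_nonneg a.2.1]; exact a.2.2.2.2.2.2 k hk
  obtain ⟨C, hC0, hC⟩ := key.exists_nonneg
  refine ⟨C, hC0, fun p₁ p₂ q₁ q₂ θ hθ h1 h2 h3 h4 h5 => ?_⟩
  have := Filter.eventually_top.1 hC.bound ⟨⟨⟨p₁, p₂⟩, ⟨q₁, q₂⟩, θ⟩, hθ, h1, h2, h3, h4, h5⟩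
  simpa only [Real.norm_of_nonneg hθ] using this

theorem exists_norm_taylorComp_sub_le (E : Type*) [NormedAddCommGroup E] [NormedSpace ℝ E]
    (n : ℕ) (B : ℝ) :
    ∃ C : ℝ, 0 ≤ C ∧ ∀ (p₁ p₂ : FormalMultilinearSeries ℝ ℝ ℝ)
      (q₁ q₂ : FormalMultilinearSeries ℝ E ℝ) (A D R θ : ℝ), 0 < A → 0 < D → 0 < R → 0 ≤ θ →
      (∀ j ≤ n, ‖p₁ j‖ ≤ B * (R / A ^ j)) →
      (∀ j ≤ n, ‖p₁ j - p₂ j‖ ≤ B * θ * (R / A ^ j)) →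
      (∀ i ≤ n, ‖q₁ i‖ ≤ B * (A * D ^ i)) → (∀ i ≤ n, ‖q₂ i‖ ≤ B * (A * D ^ i)) →
      (∀ i ≤ n, ‖q₁ i - q₂ i‖ ≤ B * θ * (A * D ^ i)) →
      ‖p₁.taylorComp q₁ n - p₂.taylorComp q₂ n‖ ≤ C * θ * (R * D ^ n) := by
  obtain ⟨C, hC0, hC⟩ := exists_norm_taylorComp_sub_le_of_le E n B
  refine ⟨C, hC0, fun p₁ p₂ q₁ q₂ A D R θ hA hD hR hθ h1 h2 h3 h4 h5 => ?_⟩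
  have hp (j : ℕ) : 0 < A ^ j / R := by positivity
  have hq (i : ℕ) : 0 < (A * D ^ i)⁻¹ := by positivity
  have scale_p {j : ℕ} {v : ℝ [×j]→L[ℝ] ℝ} {b : ℝ} (h : ‖v‖ ≤ b * (R / A ^ j)) :
      ‖(A ^ j / R) • v‖ ≤ b := by
    rw [norm_smul, Real.norm_of_nonneg (hp j).le, ← le_div_iff₀' (hp j)]
    exact h.trans_eq (by field_simp)
  have scale_q {i : ℕ} {v : E [×i]→L[ℝ] ℝ} {b : ℝ} (h : ‖v‖ ≤ b * (A * D ^ i)) :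
      ‖(A * D ^ i)⁻¹ • v‖ ≤ b := by
    rw [norm_smul, Real.norm_of_nonneg (hq i).le, ← le_div_iff₀' (hq i)]
    exact h.trans_eq (by field_simp)
  have := hC (fun j => (A ^ j / R) • p₁ j) (fun j => (A ^ j / R) • p₂ j)
    (fun i => (A * D ^ i)⁻¹ • q₁ i) (fun i => (A * D ^ i)⁻¹ • q₂ i) θ hθ
    (fun j hj => scale_p (h1 j hj))
    (fun j hj => (congrArg norm (smul_sub (A ^ j / R) (p₁ j) (p₂ j)).symm).trans_le
      (scale_p (h2 j hj)))
    (fun i hi => scale_q (h3 i hi)) (fun i hi => scale_q (h4 i hi))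
    (fun i hi => (congrArg norm (smul_sub (A * D ^ i)⁻¹ (q₁ i) (q₂ i)).symm).trans_le
      (scale_q (h5 i hi)))
  rw [FormalMultilinearSeries.taylorComp_rescale _ _ hA hD hR,
    FormalMultilinearSeries.taylorComp_rescale _ _ hA hD hR, ← smul_sub, norm_smul,
    Real.norm_of_nonneg (by positivity), inv_mul_le_iff₀ (by positivity)] at this
  linarith

theorem iteratedDeriv_rpow_const (r a : ℝ) (j : ℕ) :
    iteratedDeriv j (fun t : ℝ => t ^ r) a = (descPochhammer ℝ j).eval r * a ^ (r - j) := by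
  rw [iteratedDeriv_eq_iterate, Real.iter_deriv_rpow_const]

theorem norm_iteratedFDeriv_sub_eq (f : ℝ → ℝ) (j : ℕ) (a b : ℝ) :
    ‖iteratedFDeriv ℝ j f a - iteratedFDeriv ℝ j f b‖ =
      |iteratedDeriv j f a - iteratedDeriv j f b| := by
  rw [iteratedFDeriv_eq_equiv_comp]
  simp only [Function.comp_apply]
  rw [← map_sub, LinearIsometryEquiv.norm_map, Real.norm_eq_abs]

theorem exists_abs_one_sub_rpow_le (p : ℝ) {L : ℝ} (hL : 1 ≤ L) :
    ∃ K : ℝ, 0 ≤ K ∧ ∀ t ∈ Icc L⁻¹ L, |1 - t ^ p| ≤ K * |1 - t| := by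
  have hL0 : 0 < L := one_pos.trans_le hL
  have hpos : ∀ t ∈ Icc L⁻¹ L, 0 < t := fun t ht => (inv_pos.2 hL0).trans_le ht.1
  have hd : ∀ t ∈ Icc L⁻¹ L, HasDerivWithinAt (fun t : ℝ => t ^ p) (p * t ^ (p - 1))
      (Icc L⁻¹ L) t := fun t ht =>
    (Real.hasDerivAt_rpow_const (Or.inl (hpos t ht).ne')).hasDerivWithinAt
  have hc : ContinuousOn (fun t : ℝ => p * t ^ (p - 1)) (Icc L⁻¹ L) := fun t ht =>
    ((Real.continuousAt_rpow_const t (p - 1) (Or.inl (hpos t ht).ne')).const_mul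
      p).continuousWithinAt
  obtain ⟨K, hK⟩ := isCompact_Icc.exists_bound_of_continuousOn hc
  have h1 : (1 : ℝ) ∈ Icc L⁻¹ L := ⟨inv_le_one_of_one_le₀ hL, hL⟩
  refine ⟨K, (norm_nonneg _).trans (hK 1 h1), fun t ht => ?_⟩
  simpa using (convex_Icc L⁻¹ L).norm_image_sub_le_of_norm_hasDerivWithin_le hd hK ht h1

theorem exists_norm_iteratedFDeriv_rpow_le (r : ℝ) {L : ℝ} (hL : 1 ≤ L) (n : ℕ) :
    ∃ B : ℝ, 0 ≤ B ∧ ∀ j ≤ n, ∀ A : ℝ, 0 < A →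
      ‖iteratedFDeriv ℝ j (fun t : ℝ => t ^ r) A‖ ≤ B * (A ^ r / A ^ j) ∧
      ∀ b ∈ Icc (L⁻¹ * A) (L * A),
        ‖iteratedFDeriv ℝ j (fun t : ℝ => t ^ r) A - iteratedFDeriv ℝ j (fun t : ℝ => t ^ r) b‖ ≤
          B * (|A - b| / A) * (A ^ r / A ^ j) := by
  choose K hK0 hK using fun j : ℕ => exists_abs_one_sub_rpow_le (r - j) hL
  let c (j : ℕ) : ℝ := |(descPochhammer ℝ j).eval r|
  have hterm (j : ℕ) : 0 ≤ c j * (1 + K j) := mul_nonneg (abs_nonneg _) (by linarith [hK0 j])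
  refine ⟨∑ j ∈ Finset.range (n + 1), c j * (1 + K j), Finset.sum_nonneg fun j _ => hterm j,
    fun j hj A hA => ?_⟩
  have hB : c j * (1 + K j) ≤ ∑ j ∈ Finset.range (n + 1), c j * (1 + K j) :=
    Finset.single_le_sum (f := fun j => c j * (1 + K j)) (fun j _ => hterm j)
      (Finset.mem_range.2 (by lia))
  have hpow : A ^ (r - j) = A ^ r / A ^ j := by rw [Real.rpow_sub hA, Real.rpow_natCast]
  have hcj : 0 ≤ c j := abs_nonneg _
  have hcK : 0 ≤ c j * K j := mul_nonneg hcj (hK0 j)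
  constructor
  · rw [norm_iteratedFDeriv_eq_norm_iteratedDeriv, iteratedDeriv_rpow_const, norm_mul,
      Real.norm_eq_abs, Real.norm_of_nonneg (by positivity), hpow]
    gcongr
    exact le_trans (by linarith : c j ≤ _) hB
  · intro b hb
    rw [norm_iteratedFDeriv_sub_eq, iteratedDeriv_rpow_const, iteratedDeriv_rpow_const, ← mul_sub,
      abs_mul]
    have hb0 : 0 < b := lt_of_lt_of_le (mul_pos (inv_pos.2 (one_pos.trans_le hL)) hA) hb.1
    have ht : b / A ∈ Icc L⁻¹ L := ⟨(le_div_iff₀ hA).2 hb.1, (div_le_iff₀ hA).2 hb.2⟩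
    have e1 : A ^ (r - j) - b ^ (r - j) = (1 - (b / A) ^ (r - j)) * A ^ (r - j) := by
      rw [Real.div_rpow hb0.le hA.le]; field_simp
    have e2 : |1 - b / A| = |A - b| / A := by
      rw [one_sub_div hA.ne', abs_div, abs_of_pos hA]
    rw [e1, abs_mul, abs_of_pos (Real.rpow_pos_of_pos hA _), hpow, ← mul_assoc]
    refine mul_le_mul_of_nonneg_right ?_ (by positivity)
    calc c j * |1 - (b / A) ^ (r - j)| ≤ c j * (K j * |1 - b / A|) := by
          gcongr; exact hK j _ ht
      _ = c j * K j * (|A - b| / A) := by rw [e2]; ring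
      _ ≤ _ := by gcongr; linarith

theorem lowFloor_lt {s : ℝ} (hs : 0 < s) : (lowFloor s : ℝ) < s := by
  rw [lowFloor]
  exact Nat.lt_ceil.1 (Nat.sub_lt (Nat.ceil_pos.2 hs) one_pos)

theorem le_lowFloor_add_one (s : ℝ) : s ≤ (lowFloor s : ℝ) + 1 := by
  rw [lowFloor]
  have h : ⌈s⌉₊ ≤ ⌈s⌉₊ - 1 + 1 := by lia
  exact (Nat.le_ceil s).trans (by exact_mod_cast h)

theorem lowFloor_mono {s t : ℝ} (h : s ≤ t) : lowFloor s ≤ lowFloor t :=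
  Nat.sub_le_sub_right (Nat.ceil_mono h) 1

/-- Real-valued form of the assertion that `F` lies in `F^s(Ω)` with all seminorms bounded
by `M`. -/
structure FlatBound (s M : ℝ) (Ω : Set E) (F : E → ℝ) : Prop where
  const_nonneg : 0 ≤ M
  contDiffOn : ContDiffOn ℝ (lowFloor s) F Ω
  nonneg : ∀ x ∈ Ω, 0 ≤ F x
  le : ∀ x ∈ Ω, F x ≤ M
  norm_le : ∀ m ≤ lowFloor s, ∀ x ∈ Ω,
    ‖iteratedFDeriv ℝ m F x‖ ≤ M ^ (m / s) * F x ^ (1 - m / s)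
  holder : ∀ x ∈ Ω, ∀ y ∈ Ω,
    ‖iteratedFDeriv ℝ (lowFloor s) F x - iteratedFDeriv ℝ (lowFloor s) F y‖ ≤
      M * ‖x - y‖ ^ (s - lowFloor s)

theorem MemFs.flatBound {s : ℝ} (hs : 0 < s) {Ω : Set E} (hΩ : IsOpen Ω) {F : E → ℝ}
    (h : MemFs s Ω F) : FlatBound s (fsNorm s Ω F).toReal Ω F := by
  obtain ⟨⟨hcd, hcs⟩, hnn, hfl⟩ := h
  have hN : fsNorm s Ω F ≠ ∞ := ENNReal.add_ne_top.2 ⟨hcs, hfl⟩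
  set M := (fsNorm s Ω F).toReal with hM
  have hMN : ENNReal.ofReal M = fsNorm s Ω F := ENNReal.ofReal_toReal hN
  have hM0 : 0 ≤ M := ENNReal.toReal_nonneg
  have hderiv : derivSup s Ω F ≤ ENNReal.ofReal M :=
    hMN ▸ le_self_add.trans (le_self_add (a := csNorm s Ω F))
  have hhold : holderSemi s Ω F ≤ ENNReal.ofReal M :=
    hMN ▸ le_add_self.trans (le_self_add (a := csNorm s Ω F))
  have hflat : flatSemi s Ω F ≤ ENNReal.ofReal M := hMN ▸ le_add_self
  simp only [derivSup, holderSemi, flatSemi, iSup_le_iff] at hderiv hhold hflat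
  have hle : ∀ x ∈ Ω, F x ≤ M := by
    intro x hx
    have h1 : (‖iteratedFDerivWithin ℝ 0 F Ω x‖₊ : ℝ≥0∞) ≤ ENNReal.ofReal M :=
      hderiv 0 (Nat.zero_le _) x hx
    rw [← enorm_eq_nnnorm, ← ofReal_norm, norm_iteratedFDerivWithin_zero,
      ENNReal.ofReal_le_ofReal_iff hM0] at h1
    exact (le_abs_self _).trans h1
  refine ⟨hM0, mod_cast hcd, hnn, hle, ?_, ?_⟩
  · intro m hm x hx
    have hms : (m : ℝ) < s := lt_of_le_of_lt (by exact_mod_cast hm) (lowFloor_lt hs)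
    rcases Nat.eq_zero_or_pos m with rfl | hm1
    · simp [abs_of_nonneg (hnn x hx)]
    have hmpos : (0 : ℝ) < m := by exact_mod_cast hm1
    have h1 : ((‖iteratedFDerivWithin ℝ m F Ω x‖₊ : ℝ≥0∞) ^ s
      / ENNReal.ofReal (F x) ^ (s - (m : ℝ))) ^ (1 / (m : ℝ)) ≤ ENNReal.ofReal M :=
      hflat m hm1 hm x hx
    rw [iteratedFDerivWithin_of_isOpen m hΩ hx, ← enorm_eq_nnnorm, ← ofReal_norm] at h1
    set a := ‖iteratedFDeriv ℝ m F x‖ with ha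
    have ha0 : 0 ≤ a := norm_nonneg _
    rw [one_div, ENNReal.rpow_inv_le_iff hmpos] at h1
    have h2 : ENNReal.ofReal a ^ s ≤
        ENNReal.ofReal M ^ (m : ℝ) * ENNReal.ofReal (F x) ^ (s - (m : ℝ)) := by
      refine (ENNReal.div_le_iff_le_mul (Or.inr ?_) (Or.inl ?_)).1 h1
      · exact ENNReal.rpow_ne_top_of_nonneg hmpos.le ENNReal.ofReal_ne_top
      · exact ENNReal.rpow_ne_top_of_nonneg (by linarith) ENNReal.ofReal_ne_top
    rw [ENNReal.ofReal_rpow_of_nonneg ha0 hs.le, ENNReal.ofReal_rpow_of_nonneg hM0 hmpos.le,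
      ENNReal.ofReal_rpow_of_nonneg (hnn x hx) (by linarith),
      ← ENNReal.ofReal_mul (by positivity), ENNReal.ofReal_le_ofReal_iff
        (mul_nonneg (by positivity) (Real.rpow_nonneg (hnn x hx) _)),
      ← Real.le_rpow_inv_iff_of_pos ha0
        (mul_nonneg (by positivity) (Real.rpow_nonneg (hnn x hx) _)) hs,
      Real.mul_rpow (by positivity) (Real.rpow_nonneg (hnn x hx) _),
      ← Real.rpow_mul hM0, ← Real.rpow_mul (hnn x hx)] at h2
    convert h2 using 3
    all_goals field_simp
  · intro x hx y hy
    rcases eq_or_ne x y with rfl | hxy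
    · simp only [sub_self, norm_zero]
      exact mul_nonneg hM0 (Real.rpow_nonneg le_rfl _)
    have hpos : 0 < ‖x - y‖ ^ (s - (lowFloor s : ℝ)) :=
      Real.rpow_pos_of_pos (norm_pos_iff.2 (sub_ne_zero.2 hxy)) _
    have h1 : (‖iteratedFDerivWithin ℝ (lowFloor s) F Ω x
        - iteratedFDerivWithin ℝ (lowFloor s) F Ω y‖₊ : ℝ≥0∞)
      / ENNReal.ofReal (‖x - y‖ ^ (s - (lowFloor s : ℝ))) ≤ ENNReal.ofReal M :=
      hhold x hx y hy hxy
    rw [iteratedFDerivWithin_of_isOpen _ hΩ hx, iteratedFDerivWithin_of_isOpen _ hΩ hy,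
      ← enorm_eq_nnnorm, ← ofReal_norm, ← ENNReal.ofReal_div_of_pos hpos,
      ENNReal.ofReal_le_ofReal_iff hM0, div_le_iff₀ hpos] at h1
    exact h1

theorem FlatBound.norm_iteratedFDeriv_le {s M : ℝ} (hs : 0 < s) {Ω : Set E} {F : E → ℝ}
    (h : FlatBound s M Ω F) {m : ℕ} (hm : m ≤ lowFloor s) {x : E} (hx : x ∈ Ω) :
    ‖iteratedFDeriv ℝ m F x‖ ≤ M := by
  have hms : (m : ℝ) / s ≤ 1 :=
    (div_le_one hs).2 (le_trans (by exact_mod_cast hm) (lowFloor_lt hs).le)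
  have h0 : 0 ≤ (m : ℝ) / s := by positivity
  refine (h.norm_le m hm x hx).trans ?_
  calc M ^ (m / s) * F x ^ (1 - m / s) ≤ M ^ (m / s) * M ^ (1 - m / s) := by
        have := h.const_nonneg
        have h1 : 0 ≤ 1 - (m : ℝ) / s := by linarith
        gcongr
        · exact h.nonneg x hx
        · exact h.le x hx
    _ = M := by
        rw [← Real.rpow_add_of_nonneg h.const_nonneg h0 (by linarith)]
        simp

theorem FlatBound.fsNorm_le {s M : ℝ} (hs : 0 < s) {Ω : Set E} (hΩ : IsOpen Ω) {F : E → ℝ}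
    (h : FlatBound s M Ω F) : fsNorm s Ω F ≤ ENNReal.ofReal (3 * M) := by
  have hM0 := h.const_nonneg
  have hderiv : derivSup s Ω F ≤ ENNReal.ofReal M := by
    refine iSup₂_le fun m hm => iSup₂_le fun x hx => ?_
    rw [iteratedFDerivWithin_of_isOpen m hΩ hx, ← enorm_eq_nnnorm, ← ofReal_norm]
    exact ENNReal.ofReal_le_ofReal (h.norm_iteratedFDeriv_le hs hm hx)
  have hhold : holderSemi s Ω F ≤ ENNReal.ofReal M := by
    refine iSup₂_le fun x hx => iSup₂_le fun y hy => iSup_le fun hxy => ?_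
    have hpos : 0 < ‖x - y‖ ^ (s - (lowFloor s : ℝ)) :=
      Real.rpow_pos_of_pos (norm_pos_iff.2 (sub_ne_zero.2 hxy)) _
    rw [iteratedFDerivWithin_of_isOpen _ hΩ hx, iteratedFDerivWithin_of_isOpen _ hΩ hy,
      ← enorm_eq_nnnorm, ← ofReal_norm, ← ENNReal.ofReal_div_of_pos hpos]
    exact ENNReal.ofReal_le_ofReal ((div_le_iff₀ hpos).2 (h.holder x hx y hy))
  have hflat : flatSemi s Ω F ≤ ENNReal.ofReal M := by
    refine iSup₂_le fun m hm1 => iSup₂_le fun hm x => iSup_le fun hx => ?_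
    have hms : (m : ℝ) < s := lt_of_le_of_lt (by exact_mod_cast hm) (lowFloor_lt hs)
    have hmpos : (0 : ℝ) < m := by exact_mod_cast hm1
    have hF := h.nonneg x hx
    rw [iteratedFDerivWithin_of_isOpen m hΩ hx, ← enorm_eq_nnnorm, ← ofReal_norm, one_div,
      ENNReal.rpow_inv_le_iff hmpos]
    refine ENNReal.div_le_of_le_mul ?_
    rw [ENNReal.ofReal_rpow_of_nonneg (norm_nonneg _) hs.le,
      ENNReal.ofReal_rpow_of_nonneg hM0 hmpos.le,
      ENNReal.ofReal_rpow_of_nonneg hF (by linarith), ← ENNReal.ofReal_mul (by positivity)]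
    refine ENNReal.ofReal_le_ofReal ?_
    calc ‖iteratedFDeriv ℝ m F x‖ ^ s ≤ (M ^ (m / s) * F x ^ (1 - m / s)) ^ s := by
          gcongr; exact h.norm_le m hm x hx
      _ = M ^ (m : ℝ) * F x ^ (s - m) := by
          rw [Real.mul_rpow (by positivity) (by positivity), ← Real.rpow_mul hM0,
            ← Real.rpow_mul hF]
          congr 2 <;> field_simp
  calc fsNorm s Ω F ≤ ENNReal.ofReal M + ENNReal.ofReal M + ENNReal.ofReal M :=
        add_le_add (add_le_add hderiv hhold) hflat
    _ = ENNReal.ofReal (3 * M) := by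
        rw [← ENNReal.ofReal_add hM0 hM0, ← ENNReal.ofReal_add (by positivity) hM0]
        congr 1; ring

theorem FlatBound.memFs {s M : ℝ} (hs : 0 < s) {Ω : Set E} (hΩ : IsOpen Ω) {F : E → ℝ}
    (h : FlatBound s M Ω F) : MemFs s Ω F := by
  have hN : fsNorm s Ω F ≠ ∞ := ne_top_of_le_ne_top ENNReal.ofReal_ne_top (h.fsNorm_le hs hΩ)
  obtain ⟨hcs, hfl⟩ := ENNReal.add_ne_top.1 hN
  exact ⟨⟨mod_cast h.contDiffOn, hcs⟩, h.nonneg, hfl⟩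

theorem FlatBound.contDiffAt {s M : ℝ} {Ω : Set E} (hΩ : IsOpen Ω) {F : E → ℝ}
    (h : FlatBound s M Ω F) {x : E} (hx : x ∈ Ω) : ContDiffAt ℝ (lowFloor s) F x :=
  h.contDiffOn.contDiffAt (hΩ.mem_nhds hx)

theorem FlatBound.abs_rpow_inv_sub_le {s M : ℝ} (hs : 0 < s) (hk : 1 ≤ lowFloor s) {Ω : Set E}
    (hconv : Convex ℝ Ω) (hΩ : IsOpen Ω) {F : E → ℝ} (h : FlatBound s M Ω F) {x y : E}
    (hx : x ∈ Ω) (hy : y ∈ Ω) :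
    |F x ^ (1 / s) - F y ^ (1 / s)| ≤ M ^ (1 / s) * ‖x - y‖ := by
  have hs1 : 1 < s := lt_of_le_of_lt (by exact_mod_cast hk) (lowFloor_lt hs)
  have hM0 := h.const_nonneg
  have hs' : 1 / s ≤ 1 := (div_le_one hs).2 hs1.le
  have key : ∀ ε : ℝ, 0 < ε →
      |(F x + ε) ^ (1 / s) - (F y + ε) ^ (1 / s)| ≤ M ^ (1 / s) * ‖x - y‖ := by
    intro ε hε
    refine hconv.norm_image_sub_le_of_norm_hasFDerivWithin_le
      (f := fun z => (F z + ε) ^ (1 / s))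
      (f' := fun z => (1 / s * (F z + ε) ^ (1 / s - 1)) • fderiv ℝ F z) (fun z hz => ?_)
      (fun z hz => ?_) hy hx
    · have hd : HasFDerivAt F (fderiv ℝ F z) z :=
        ((h.contDiffAt hΩ hz).differentiableAt
          (by simpa using Nat.one_le_iff_ne_zero.1 hk)).hasFDerivAt
      have hne : F z + ε ≠ 0 := by linarith [h.nonneg z hz]
      exact ((hd.add_const ε).rpow_const (Or.inl hne)).hasFDerivWithinAt
    · have hF := h.nonneg z hz
      have h1 : ‖fderiv ℝ F z‖ ≤ M ^ (1 / s) * F z ^ (1 - 1 / s) := by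
        refine le_trans (le_of_eq ?_) (h.norm_le 1 hk z hz |>.trans_eq (by rw [Nat.cast_one]))
        rw [norm_iteratedFDeriv_one]
      have hFe : 0 < F z + ε := by linarith
      rw [norm_smul, Real.norm_of_nonneg (by positivity)]
      have h2 : F z ^ (1 - 1 / s) ≤ (F z + ε) ^ (1 - 1 / s) :=
        Real.rpow_le_rpow hF (by linarith) (by linarith)
      calc 1 / s * (F z + ε) ^ (1 / s - 1) * ‖fderiv ℝ F z‖
          ≤ 1 * (F z + ε) ^ (1 / s - 1) * (M ^ (1 / s) * (F z + ε) ^ (1 - 1 / s)) := by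
            gcongr
            exact h1.trans (by gcongr)
        _ = M ^ (1 / s) * ((F z + ε) ^ (1 / s - 1) * (F z + ε) ^ (1 - 1 / s)) := by ring
        _ = M ^ (1 / s) := by
            rw [← Real.rpow_add hFe]; simp
  have hcont (a : ℝ) : Filter.Tendsto (fun ε : ℝ => (a + ε) ^ (1 / s)) (nhdsWithin 0 (Ioi 0))
      (nhds (a ^ (1 / s))) := by
    have hc : Continuous fun ε : ℝ => (a + ε) ^ (1 / s) :=
      (continuous_const.add continuous_id).rpow_const fun _ => Or.inr (by positivity)
    simpa using (hc.tendsto 0).mono_left nhdsWithin_le_nhds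
  exact le_of_tendsto ((hcont (F x)).sub (hcont (F y))).abs
    (by filter_upwards [self_mem_nhdsWithin] with ε hε using key ε hε)

theorem rpow_mul_rescale_pow {A M s : ℝ} (hA : 0 < A) (hM : 0 < M) (r : ℝ) (i : ℕ) :
    A ^ r * ((M / A) ^ (1 / s)) ^ i = M ^ (i / s) * A ^ (r - i / s) := by
  rw [← Real.rpow_natCast, ← Real.rpow_mul (by positivity), Real.div_rpow hM.le hA.le,
    Real.rpow_sub hA, one_div_mul_eq_div]
  ring

theorem mul_rescale_pow {A M s : ℝ} (hA : 0 < A) (hM : 0 < M) (i : ℕ) :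
    A * ((M / A) ^ (1 / s)) ^ i = M ^ (i / s) * A ^ (1 - i / s) := by
  simpa using rpow_mul_rescale_pow (s := s) hA hM 1 i

theorem FormalMultilinearSeries.zero_taylorComp (q : FormalMultilinearSeries ℝ E ℝ) (n : ℕ) :
    (0 : FormalMultilinearSeries ℝ ℝ ℝ).taylorComp q n = 0 := by
  refine Finset.sum_eq_zero fun c _ => norm_le_zero_iff.1 ?_
  refine (c.norm_compAlongOrderedFinpartition_le _ _).trans_eq ?_
  exact (congrArg (· * _) norm_zero).trans (zero_mul _)

theorem iteratedFDeriv_rpow_eq_taylorComp {s M r : ℝ} {Ω : Set E} (hΩ : IsOpen Ω) {F : E → ℝ}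
    (h : FlatBound s M Ω F) {x : E} (hx : x ∈ Ω) (hFx : 0 < F x) {m : ℕ} (hm : m ≤ lowFloor s) :
    iteratedFDeriv ℝ m (fun z => F z ^ r) x =
      (ftaylorSeries ℝ (fun t : ℝ => t ^ r) (F x)).taylorComp (ftaylorSeries ℝ F x) m :=
  iteratedFDeriv_comp (n := (lowFloor s : WithTop ℕ∞)) (g := fun t : ℝ => t ^ r)
    (Real.contDiffAt_rpow_const_of_ne hFx.ne') (h.contDiffAt hΩ hx) (by exact_mod_cast hm)

theorem exists_uniform_const {P : ℕ → ℝ → Prop}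
    (hmono : ∀ m C C', C ≤ C' → P m C → P m C') (n : ℕ) (h : ∀ m ≤ n, ∃ C, P m C) :
    ∃ C, 1 ≤ C ∧ ∀ m ≤ n, P m C := by
  induction n with
  | zero =>
    obtain ⟨C, hC⟩ := h 0 le_rfl
    exact ⟨max C 1, le_max_right _ _, fun m hm => by
      obtain rfl := Nat.le_zero.1 hm
      exact hmono _ _ _ (le_max_left _ _) hC⟩
  | succ n ih =>
    obtain ⟨C, hC1, hC⟩ := ih fun m hm => h m (by lia)
    obtain ⟨C', hC'⟩ := h (n + 1) le_rfl
    refine ⟨max C C', hC1.trans (le_max_left _ _), fun m hm => ?_⟩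
    rcases Nat.le_succ_iff.1 hm with hm | rfl
    · exact hmono _ _ _ (le_max_left _ _) (hC m hm)
    · exact hmono _ _ _ (le_max_right _ _) hC'

theorem exists_norm_iteratedFDeriv_rpow_comp_le (E : Type*) [NormedAddCommGroup E]
    [NormedSpace ℝ E] (r : ℝ) (s : ℝ) :
    ∃ C : ℝ, 1 ≤ C ∧ ∀ m ≤ lowFloor s, ∀ (Ω : Set E), IsOpen Ω → ∀ (F : E → ℝ) (M : ℝ),
      FlatBound s M Ω F → ∀ x ∈ Ω, 0 < F x →
        ‖iteratedFDeriv ℝ m (fun z => F z ^ r) x‖ ≤ C * (M ^ (m / s) * F x ^ (r - m / s)) := by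
  refine exists_uniform_const ?_ _ fun m hm => ?_
  · intro m C C' hCC' h Ω hΩ F M hF x hx hFx
    refine (h Ω hΩ F M hF x hx hFx).trans ?_
    have := hF.const_nonneg
    gcongr
  obtain ⟨B, hB0, hB⟩ := exists_norm_iteratedFDeriv_rpow_le r (le_refl (1 : ℝ)) m
  obtain ⟨C, hC0, hC⟩ := exists_norm_taylorComp_sub_le E m (max B 1)
  refine ⟨C, fun Ω hΩ F M hF x hx hFx => ?_⟩
  have hM : 0 < M := hFx.trans_le (hF.le x hx)
  have hp : ∀ j ≤ m, ‖ftaylorSeries ℝ (fun t : ℝ => t ^ r) (F x) j‖ ≤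
      max B 1 * (F x ^ r / F x ^ j) := fun j hj =>
    ((hB j hj (F x) hFx).1).trans (by gcongr; exact le_max_left _ _)
  have hq : ∀ i ≤ m, ‖ftaylorSeries ℝ F x i‖ ≤
      max B 1 * (F x * ((M / F x) ^ (1 / s)) ^ i) := by
    intro i hi
    rw [mul_rescale_pow hFx hM]
    refine (hF.norm_le i (hi.trans hm) x hx).trans ?_
    exact le_mul_of_one_le_left (by positivity) (le_max_right _ _)
  have := hC (ftaylorSeries ℝ (fun t : ℝ => t ^ r) (F x)) 0 (ftaylorSeries ℝ F x)
    (ftaylorSeries ℝ F x) (F x) ((M / F x) ^ (1 / s)) (F x ^ r) 1 hFx (by positivity)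
    (by positivity) zero_le_one hp
    (fun j hj => (congrArg norm (sub_zero _)).trans_le (by simpa using hp j hj)) hq hq
    (fun i hi => by
      rw [sub_self, norm_zero]
      positivity)
  rw [FormalMultilinearSeries.zero_taylorComp, sub_zero, mul_one, rpow_mul_rescale_pow hFx hM,
    ← iteratedFDeriv_rpow_eq_taylorComp hΩ hF hx hFx hm] at this
  exact this

theorem FlatBound.mem_Icc_of_near {s M : ℝ} (hs : 0 < s) (hk : 1 ≤ lowFloor s) {Ω : Set E}
    (hconv : Convex ℝ Ω) (hΩ : IsOpen Ω) {F : E → ℝ} (h : FlatBound s M Ω F) {x z : E}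
    (hx : x ∈ Ω) (hz : z ∈ Ω) (hFx : 0 < F x)
    (hxz : (M / F x) ^ (1 / s) * ‖x - z‖ ≤ 1 / 2) :
    F z ∈ Icc ((2 ^ s)⁻¹ * F x) (2 ^ s * F x) := by
  have hFz := h.nonneg z hz
  have hM0 := h.const_nonneg
  have hpow {a : ℝ} (ha : 0 ≤ a) : (a ^ (1 / s)) ^ s = a := by
    rw [one_div, Real.rpow_inv_rpow ha hs.ne']
  have hroot : 0 < F x ^ (1 / s) := by positivity
  have hrootz : 0 ≤ F z ^ (1 / s) := by positivity
  have hdist : M ^ (1 / s) * ‖x - z‖ ≤ F x ^ (1 / s) / 2 := by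
    rw [Real.div_rpow hM0 hFx.le, div_mul_eq_mul_div, div_le_iff₀ hroot] at hxz
    linarith
  have habs := abs_le.1 ((h.abs_rpow_inv_sub_le hs hk hconv hΩ hx hz).trans hdist)
  constructor
  · calc (2 ^ s)⁻¹ * F x = (2⁻¹ * F x ^ (1 / s)) ^ s := by
          rw [Real.mul_rpow (by norm_num) hroot.le, hpow hFx.le, Real.inv_rpow (by norm_num)]
      _ ≤ (F z ^ (1 / s)) ^ s := by gcongr; linarith
      _ = F z := hpow hFz
  · calc F z = (F z ^ (1 / s)) ^ s := (hpow hFz).symm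
      _ ≤ (2 * F x ^ (1 / s)) ^ s := by gcongr; linarith
      _ = 2 ^ s * F x := by rw [Real.mul_rpow (by norm_num) hroot.le, hpow hFx.le]

theorem FlatBound.norm_iteratedFDeriv_le_of_near {s M : ℝ} (hs : 0 < s) (hk : 1 ≤ lowFloor s)
    {Ω : Set E} (hconv : Convex ℝ Ω) (hΩ : IsOpen Ω) {F : E → ℝ} (h : FlatBound s M Ω F)
    {x z : E} (hx : x ∈ Ω) (hz : z ∈ Ω) (hFx : 0 < F x)
    (hxz : (M / F x) ^ (1 / s) * ‖x - z‖ ≤ 1 / 2) {i : ℕ} (hi : i ≤ lowFloor s) :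
    ‖iteratedFDeriv ℝ i F z‖ ≤ 2 ^ s * (F x * ((M / F x) ^ (1 / s)) ^ i) := by
  have hM : 0 < M := hFx.trans_le (h.le x hx)
  have hFz := h.nonneg z hz
  have hi0 : 0 ≤ (i : ℝ) / s := by positivity
  have hi1 : 0 ≤ 1 - (i : ℝ) / s :=
    sub_nonneg.2 ((div_le_one hs).2 (le_trans (by exact_mod_cast hi) (lowFloor_lt hs).le))
  have h2 : (1 : ℝ) ≤ 2 ^ s := Real.one_le_rpow one_le_two hs.le
  rw [mul_rescale_pow hFx hM]
  calc ‖iteratedFDeriv ℝ i F z‖ ≤ M ^ (i / s) * F z ^ (1 - i / s) := h.norm_le i hi z hz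
    _ ≤ M ^ (i / s) * (2 ^ s * F x) ^ (1 - i / s) := by
        gcongr
        exact (h.mem_Icc_of_near hs hk hconv hΩ hx hz hFx hxz).2
    _ = (2 ^ s) ^ (1 - i / s) * (M ^ (i / s) * F x ^ (1 - i / s)) := by
        rw [Real.mul_rpow (by positivity) hFx.le]; ring
    _ ≤ 2 ^ s * (M ^ (i / s) * F x ^ (1 - i / s)) := by
        gcongr
        exact Real.rpow_le_self_of_one_le h2 (by linarith)

theorem FlatBound.norm_iteratedFDeriv_sub_le_of_near {s M : ℝ} (hs : 0 < s)
    (hk : 1 ≤ lowFloor s) {Ω : Set E} (hconv : Convex ℝ Ω) (hΩ : IsOpen Ω) {F : E → ℝ}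
    (h : FlatBound s M Ω F) {x y : E} (hx : x ∈ Ω) (hy : y ∈ Ω) (hFx : 0 < F x)
    (hxy : (M / F x) ^ (1 / s) * ‖x - y‖ ≤ 1 / 2) {i : ℕ} (hi : i < lowFloor s) :
    ‖iteratedFDeriv ℝ i F x - iteratedFDeriv ℝ i F y‖ ≤
      2 ^ s * ((M / F x) ^ (1 / s) * ‖x - y‖) * (F x * ((M / F x) ^ (1 / s)) ^ i) := by
  have hD : 0 ≤ (M / F x) ^ (1 / s) :=
    Real.rpow_nonneg (div_nonneg h.const_nonneg hFx.le) _
  have hseg : segment ℝ x y ⊆ Ω := hconv.segment_subset hx hy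
  have hmv := (convex_segment x y).norm_image_sub_le_of_norm_hasFDerivWithin_le
    (𝕜 := ℝ) (f := iteratedFDeriv ℝ i F) (f' := fderiv ℝ (iteratedFDeriv ℝ i F))
    (C := 2 ^ s * (F x * ((M / F x) ^ (1 / s)) ^ (i + 1)))
    (fun z hz => ((h.contDiffAt hΩ (hseg hz)).differentiableAt_iteratedFDeriv
      (by exact_mod_cast hi)).hasFDerivAt.hasFDerivWithinAt)
    (fun z hz => by
      rw [norm_fderiv_iteratedFDeriv]
      refine h.norm_iteratedFDeriv_le_of_near hs hk hconv hΩ hx (hseg hz) hFx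
        (le_trans ?_ hxy) hi
      gcongr
      rw [norm_sub_rev x z, norm_sub_rev x y]
      exact norm_sub_le_of_mem_segment hz)
    (right_mem_segment ℝ x y) (left_mem_segment ℝ x y)
  exact hmv.trans_eq (by ring)

theorem exists_norm_iteratedFDeriv_rpow_sub_le_of_near (E : Type*) [NormedAddCommGroup E]
    [NormedSpace ℝ E] {r s : ℝ} (hr0 : 0 < r) (hr1 : r ≤ 1) (hs : 0 < s)
    (hk : 1 ≤ lowFloor s) :
    ∃ C : ℝ, 0 ≤ C ∧ ∀ (Ω : Set E), Convex ℝ Ω → IsOpen Ω → ∀ (F : E → ℝ) (M : ℝ),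
      FlatBound s M Ω F → ∀ x ∈ Ω, ∀ y ∈ Ω, 0 < F x →
        (M / F x) ^ (1 / s) * ‖x - y‖ ≤ 1 / 2 →
        ‖iteratedFDeriv ℝ (lowFloor (r * s)) (fun z => F z ^ r) x -
          iteratedFDeriv ℝ (lowFloor (r * s)) (fun z => F z ^ r) y‖ ≤
        C * ((M / F x) ^ (1 / s) * ‖x - y‖) ^ (r * s - lowFloor (r * s)) *
          (F x ^ r * ((M / F x) ^ (1 / s)) ^ lowFloor (r * s)) := by
  have hrs : 0 < r * s := by positivity
  have hrs_le : r * s ≤ s := mul_le_of_le_one_left hs.le hr1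
  set l := lowFloor (r * s) with hl
  have hlk : l ≤ lowFloor s := lowFloor_mono hrs_le
  have hσ0 : 0 < r * s - l := sub_pos.2 (lowFloor_lt hrs)
  have hσ1 : r * s - l ≤ 1 := by linarith [le_lowFloor_add_one (r * s)]
  have h2s : (1 : ℝ) ≤ 2 ^ s := Real.one_le_rpow one_le_two hs.le
  obtain ⟨B, hB0, hB⟩ := exists_norm_iteratedFDeriv_rpow_le r h2s l
  obtain ⟨C, hC0, hC⟩ := exists_norm_taylorComp_sub_le E l (max B 1 * 2 ^ s)
  refine ⟨C, hC0, fun Ω hconv hΩ F M h x hx y hy hFx hxy => ?_⟩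
  have hM : 0 < M := hFx.trans_le (h.le x hx)
  have hFy := h.mem_Icc_of_near hs hk hconv hΩ hx hy hFx hxy
  have hFy0 : 0 < F y := lt_of_lt_of_le (by positivity) hFy.1
  have hdiff : ∀ i < lowFloor s, _ := fun i hi =>
    h.norm_iteratedFDeriv_sub_le_of_near hs hk hconv hΩ hx hy hFx hxy hi
  have hnorm_y : ∀ i ≤ lowFloor s, _ := fun i hi =>
    h.norm_iteratedFDeriv_le_of_near hs hk hconv hΩ hx hy hFx hxy (i := i) hi
  have hnorm_x : ∀ i ≤ lowFloor s, _ := fun i hi =>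
    h.norm_iteratedFDeriv_le_of_near hs hk hconv hΩ hx hx hFx (by simp) (i := i) hi
  have hDs : F x * ((M / F x) ^ (1 / s)) ^ s = M := by
    rw [one_div, Real.rpow_inv_rpow (by positivity) hs.ne']
    field_simp
  have hD : 0 < (M / F x) ^ (1 / s) := by positivity
  set D := (M / F x) ^ (1 / s)
  set δ := D * ‖x - y‖ with hδ
  have hδ0 : 0 ≤ δ := by positivity
  have hδ1 : δ ≤ 1 := by linarith
  have hδθ : δ ≤ δ ^ (r * s - l) := by
    simpa using Real.rpow_le_rpow_of_exponent_ge' hδ0 hδ1 hσ0.le hσ1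
  have hθ0 : 0 ≤ δ ^ (r * s - l) := by positivity
  have hB1 : (1 : ℝ) ≤ max B 1 := le_max_right _ _
  have hBs : 2 ^ s ≤ max B 1 * 2 ^ s := le_mul_of_one_le_left (by positivity) hB1
  rw [iteratedFDeriv_rpow_eq_taylorComp hΩ h hx hFx hlk,
    iteratedFDeriv_rpow_eq_taylorComp hΩ h hy hFy0 hlk]
  refine hC _ _ _ _ (F x) D (F x ^ r) _ hFx hD (by positivity) hθ0 (fun j hj => ?_)
    (fun j hj => ?_) (fun i hi => ?_) (fun i hi => ?_) (fun i hi => ?_)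
  · refine ((hB j hj (F x) hFx).1).trans ?_
    gcongr
    exact (le_max_left _ _).trans (le_mul_of_one_le_right (by positivity) h2s)
  · refine ((hB j hj (F x) hFx).2 _ hFy).trans ?_
    refine mul_le_mul_of_nonneg_right ?_ (by positivity)
    have h0 := hdiff 0 hk
    have hF : |F x - F y| / F x ≤ 2 ^ s * δ := by
      rw [div_le_iff₀ hFx]
      refine le_trans (le_of_eq ?_) (h0.trans_eq (by simp))
      rw [iteratedFDeriv_zero_eq_comp]
      simp only [Function.comp_apply]
      rw [← map_sub, LinearIsometryEquiv.norm_map, Real.norm_eq_abs]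
    calc B * (|F x - F y| / F x) ≤ max B 1 * (2 ^ s * δ ^ (r * s - l)) := by
          gcongr
          · exact le_max_left _ _
          · exact hF.trans (by gcongr)
      _ = _ := by ring
  · exact (hnorm_x i (hi.trans hlk)).trans (by gcongr)
  · exact (hnorm_y i (hi.trans hlk)).trans (by gcongr)
  · rcases (hi.trans hlk).lt_or_eq with hik | hik
    · exact (hdiff i hik).trans (by gcongr)
    · have hil : i = l := by lia
      have hexp : δ ^ (s - i) ≤ δ ^ (r * s - l) := by
        refine Real.rpow_le_rpow_of_exponent_ge' hδ0 hδ1 hσ0.le ?_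
        rw [hil]; linarith
      have hhol := h.holder x hx y hy
      rw [← hik] at hhol
      refine hhol.trans ?_
      have hM' : M * ‖x - y‖ ^ (s - i) = δ ^ (s - i) * (F x * D ^ i) := by
        rw [hδ, Real.mul_rpow hD.le (norm_nonneg _), ← hDs, Real.rpow_sub hD,
          Real.rpow_natCast]
        field_simp
      rw [hM']
      gcongr
      exact hexp.trans (le_mul_of_one_le_left hθ0 (h2s.trans hBs))

theorem hasFDerivWithinAt_zero_of_norm_le_rpow {G : Type*} [NormedAddCommGroup G]
    [NormedSpace ℝ G] {f : E → G} {Ω : Set E} {x : E} {K β : ℝ} (hβ : 1 < β) (hx : f x = 0)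
    (h : ∀ y ∈ Ω, ‖f y‖ ≤ K * ‖y - x‖ ^ β) : HasFDerivWithinAt f (0 : E →L[ℝ] G) Ω x := by
  refine HasFDerivWithinAt.of_isLittleO ?_
  have hlim : Filter.Tendsto (fun y => K * ‖y - x‖ ^ (β - 1)) (nhdsWithin x Ω) (nhds 0) := by
    have hc : Continuous fun y => K * ‖y - x‖ ^ (β - 1) :=
      continuous_const.mul ((continuous_id.sub continuous_const).norm.rpow_const
        fun _ => Or.inr (by linarith))
    have := hc.tendsto x
    rw [sub_self, norm_zero, Real.zero_rpow (by linarith), mul_zero] at this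
    exact this.mono_left nhdsWithin_le_nhds
  refine Asymptotics.isLittleO_iff.2 fun c hc => ?_
  filter_upwards [hlim.eventually (ge_mem_nhds hc), self_mem_nhdsWithin] with y hy hyΩ
  rw [hx, sub_zero, zero_apply, sub_zero]
  refine (h y hyΩ).trans ?_
  rcases (norm_nonneg (y - x)).eq_or_lt with h0 | h0
  · rw [← h0, Real.zero_rpow (by linarith)]; simp
  · calc K * ‖y - x‖ ^ β = K * ‖y - x‖ ^ (β - 1) * ‖y - x‖ := by
          rw [mul_assoc, ← Real.rpow_add_one h0.ne', sub_add_cancel]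
      _ ≤ c * ‖y - x‖ := by gcongr

theorem FlatBound.rpow_le_of_eq_zero {s M : ℝ} (hs : 0 < s) (hk : 1 ≤ lowFloor s) {Ω : Set E}
    (hconv : Convex ℝ Ω) (hΩ : IsOpen Ω) {F : E → ℝ} (h : FlatBound s M Ω F) {x y : E}
    (hx : x ∈ Ω) (hy : y ∈ Ω) (hFx : F x = 0) {t : ℝ} (ht : 0 ≤ t) :
    F y ^ t ≤ M ^ t * ‖y - x‖ ^ (s * t) := by
  have h1 := h.abs_rpow_inv_sub_le hs hk hconv hΩ hy hx
  have hFy := h.nonneg y hy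
  rw [hFx, Real.zero_rpow (by positivity), sub_zero, abs_of_nonneg (by positivity)] at h1
  have hM := h.const_nonneg
  calc F y ^ t = (F y ^ (1 / s)) ^ (s * t) := by
        rw [← Real.rpow_mul hFy]; congr 1; field_simp
    _ ≤ (M ^ (1 / s) * ‖y - x‖) ^ (s * t) := by gcongr
    _ = M ^ t * ‖y - x‖ ^ (s * t) := by
        rw [Real.mul_rpow (by positivity) (norm_nonneg _), ← Real.rpow_mul hM]
        congr 2; field_simp

open Classical in
/-- The candidate Taylor series of `F ^ r`, declared to vanish where `F` does. -/
def rpowSeries (r : ℝ) (F : E → ℝ) (x : E) : FormalMultilinearSeries ℝ E ℝ :=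
  fun m => if F x = 0 then 0 else iteratedFDeriv ℝ m (fun z => F z ^ r) x

theorem rpowSeries_of_eq_zero {r : ℝ} {F : E → ℝ} {x : E} (h : F x = 0) (m : ℕ) :
    rpowSeries r F x m = 0 := if_pos h

theorem rpowSeries_of_ne_zero {r : ℝ} {F : E → ℝ} {x : E} (h : F x ≠ 0) (m : ℕ) :
    rpowSeries r F x m = iteratedFDeriv ℝ m (fun z => F z ^ r) x := if_neg h

/-- The derivatives of `F ^ r` away from the zeros of `F`, bounded as the chain rule predicts. -/
def RpowDerivBound (r s C M : ℝ) (Ω : Set E) (F : E → ℝ) : Prop :=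
  ∀ m ≤ lowFloor s, ∀ x ∈ Ω, 0 < F x →
    ‖iteratedFDeriv ℝ m (fun z => F z ^ r) x‖ ≤ C * (M ^ (m / s) * F x ^ (r - m / s))

theorem RpowDerivBound.norm_rpowSeries_le {r s C M : ℝ} (hC0 : 0 ≤ C) {Ω : Set E} {F : E → ℝ}
    (hC : RpowDerivBound r s C M Ω F) (h : FlatBound s M Ω F) {m : ℕ} (hm : m ≤ lowFloor s)
    {x : E} (hx : x ∈ Ω) :
    ‖rpowSeries r F x m‖ ≤ C * (M ^ (m / s) * F x ^ (r - m / s)) := by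
  have hM := h.const_nonneg
  rcases (h.nonneg x hx).eq_or_lt with hF | hF
  · rw [rpowSeries_of_eq_zero hF.symm, norm_zero, ← hF]
    positivity
  · rw [rpowSeries_of_ne_zero hF.ne']
    exact hC m hm x hx hF

theorem FlatBound.contDiffAt_rpow {s M r : ℝ} {Ω : Set E} (hΩ : IsOpen Ω) {F : E → ℝ}
    (h : FlatBound s M Ω F) {x : E} (hx : x ∈ Ω) (hFx : F x ≠ 0) :
    ContDiffAt ℝ (lowFloor s) (fun z => F z ^ r) x :=
  (h.contDiffAt hΩ hx).rpow_const_of_ne hFx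

theorem FlatBound.eventually_rpowSeries_eq {s M r : ℝ} {Ω : Set E} (hΩ : IsOpen Ω) {F : E → ℝ}
    (h : FlatBound s M Ω F) {x : E} (hx : x ∈ Ω) (hFx : F x ≠ 0) (m : ℕ) :
    (fun y => rpowSeries r F y m) =ᶠ[nhds x] iteratedFDeriv ℝ m (fun z => F z ^ r) := by
  filter_upwards [(h.contDiffAt hΩ hx).continuousAt.eventually_ne hFx] with y hy
  exact rpowSeries_of_ne_zero hy m

theorem FlatBound.hasFTaylorSeriesUpToOn_rpow {s M r C : ℝ} (hr0 : 0 < r) (hr1 : r ≤ 1)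
    (hs : 0 < s) {Ω : Set E} (hconv : Convex ℝ Ω) (hΩ : IsOpen Ω) {F : E → ℝ}
    (h : FlatBound s M Ω F) (hC0 : 0 ≤ C) (hC : RpowDerivBound r s C M Ω F) :
    HasFTaylorSeriesUpToOn (lowFloor (r * s)) (fun z => F z ^ r) (rpowSeries r F) Ω := by
  have hrs : 0 < r * s := mul_pos hr0 hs
  have hkl : lowFloor (r * s) ≤ lowFloor s := lowFloor_mono (mul_le_of_le_one_left hs.le hr1)
  have hM := h.const_nonneg
  refine ⟨fun x _ => ?_, fun m hm x hx => ?_, fun m hm x hx => ?_⟩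
  · by_cases hF : F x = 0
    · rw [rpowSeries_of_eq_zero hF, hF, Real.zero_rpow hr0.ne']; rfl
    · rw [rpowSeries_of_ne_zero hF]; rfl
  · have hm' : m < lowFloor (r * s) := by exact_mod_cast hm
    have hk : 1 ≤ lowFloor s := by lia
    by_cases hF : F x = 0
    · have hmr : (m : ℝ) + 1 < r * s :=
        lt_of_le_of_lt (by exact_mod_cast hm') (lowFloor_lt hrs)
      have ht : 0 ≤ r - m / s := by
        rw [sub_nonneg, div_le_iff₀ hs]; linarith
      have hcurry : (rpowSeries r F x m.succ).curryLeft = 0 := by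
        rw [rpowSeries_of_eq_zero hF]; rfl
      rw [hcurry]
      refine hasFDerivWithinAt_zero_of_norm_le_rpow (K := C * (M ^ (m / s) * M ^ (r - m / s)))
        (β := s * (r - m / s)) ?_ (rpowSeries_of_eq_zero hF m) fun y hy => ?_
      · rw [mul_sub, mul_div_cancel₀ _ hs.ne']; linarith
      · refine (hC.norm_rpowSeries_le hC0 h (by lia) hy).trans ?_
        rw [mul_assoc C, mul_assoc (M ^ _)]
        gcongr
        exact h.rpow_le_of_eq_zero hs hk hconv hΩ hx hy hF ht
    · rw [rpowSeries_of_ne_zero hF]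
      have hd := (h.contDiffAt_rpow (r := r) hΩ hx hF).differentiableAt_iteratedFDeriv (m := m)
        (by exact_mod_cast hm'.trans_le hkl)
      exact (hd.hasFDerivAt.congr_of_eventuallyEq
        (h.eventually_rpowSeries_eq hΩ hx hF m)).hasFDerivWithinAt
  · have hm' : m ≤ lowFloor (r * s) := by exact_mod_cast hm
    by_cases hF : F x = 0
    · have hmr : (m : ℝ) < r * s := lt_of_le_of_lt (by exact_mod_cast hm') (lowFloor_lt hrs)
      have ht : 0 < r - m / s := by
        rw [sub_pos, div_lt_iff₀ hs]; linarith
      have hcF : ContinuousWithinAt (fun y => C * (M ^ (m / s) * F y ^ (r - m / s))) Ω x :=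
        continuousWithinAt_const.mul (continuousWithinAt_const.mul
          ((h.contDiffOn.continuousOn x hx).rpow_const (Or.inr ht.le)))
      rw [ContinuousWithinAt, hF, Real.zero_rpow ht.ne', mul_zero, mul_zero] at hcF
      rw [ContinuousWithinAt, rpowSeries_of_eq_zero hF]
      refine squeeze_zero_norm' ?_ hcF
      filter_upwards [self_mem_nhdsWithin] with y hy
      exact hC.norm_rpowSeries_le hC0 h (hm'.trans hkl) hy
    · exact (((h.contDiffAt_rpow (r := r) hΩ hx hF).continuousAt_iteratedFDeriv
        (by exact_mod_cast hm'.trans hkl)).congr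
        (h.eventually_rpowSeries_eq hΩ hx hF m).symm).continuousWithinAt

theorem HasFTaylorSeriesUpToOn.eq_iteratedFDeriv_of_isOpen {f : E → ℝ}
    {p : E → FormalMultilinearSeries ℝ E ℝ} {n m : ℕ} {Ω : Set E} (hΩ : IsOpen Ω)
    (h : HasFTaylorSeriesUpToOn n f p Ω) (hm : m ≤ n) {x : E} (hx : x ∈ Ω) :
    iteratedFDeriv ℝ m f x = p x m := by
  rw [h.eq_iteratedFDerivWithin_of_uniqueDiffOn (by exact_mod_cast hm) hΩ.uniqueDiffOn hx,
    iteratedFDerivWithin_of_isOpen m hΩ hx]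

theorem rpow_mul_rescale_rpow {A M d r s : ℝ} (hA : 0 < A) (hM : 0 < M) (hs : 0 < s)
    (hd : 0 ≤ d) (l : ℕ) :
    ((M / A) ^ (1 / s) * d) ^ (r * s - l) * (A ^ r * ((M / A) ^ (1 / s)) ^ l) =
      M ^ r * d ^ (r * s - l) := by
  have hD : 0 < (M / A) ^ (1 / s) := by positivity
  have h1 : ((M / A) ^ (1 / s)) ^ (r * s - l) * ((M / A) ^ (1 / s)) ^ l = (M / A) ^ r := by
    rw [← Real.rpow_natCast ((M / A) ^ (1 / s)) l, ← Real.rpow_add hD, sub_add_cancel,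
      ← Real.rpow_mul (by positivity)]
    congr 1; field_simp
  have h2 : (M / A) ^ r * A ^ r = M ^ r := by
    rw [← Real.mul_rpow (by positivity) hA.le, div_mul_cancel₀ _ hA.ne']
  rw [Real.mul_rpow hD.le hd, ← h2, ← h1]
  ring

theorem abs_rpow_sub_rpow_le {a b r : ℝ} (ha : 0 ≤ a) (hb : 0 ≤ b) (hr0 : 0 ≤ r) (hr1 : r ≤ 1) :
    |a ^ r - b ^ r| ≤ |a - b| ^ r := by
  wlog hab : b ≤ a generalizing a b
  · rw [abs_sub_comm, abs_sub_comm a]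
    exact this hb ha (le_of_not_ge hab)
  have h1 := Real.rpow_add_le_add_rpow (sub_nonneg.2 hab) hb hr0 hr1
  rw [sub_add_cancel] at h1
  have h2 : b ^ r ≤ a ^ r := by gcongr
  rw [abs_of_nonneg (sub_nonneg.2 h2), abs_of_nonneg (sub_nonneg.2 hab)]
  linarith

theorem one_le_two_mul_rpow {t σ : ℝ} (ht : 1 / 2 ≤ t) (hσ0 : 0 ≤ σ) (hσ1 : σ ≤ 1) :
    1 ≤ 2 * t ^ σ := by
  have h1 : (1 / 2 : ℝ) ^ (1 : ℝ) ≤ (1 / 2 : ℝ) ^ σ :=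
    Real.rpow_le_rpow_of_exponent_ge (by norm_num) (by norm_num) hσ1
  have h2 : (1 / 2 : ℝ) ^ σ ≤ t ^ σ := by gcongr
  rw [Real.rpow_one] at h1
  linarith

/-- The Hölder estimate for the top derivatives of `F ^ r`, obtained from the estimate `hnear`
at points that are close relative to the size of `F`. -/
theorem FlatBound.norm_rpowSeries_sub_le {s M r C C₁ : ℝ} (hr0 : 0 < r) (hr1 : r ≤ 1)
    (hs : 0 < s) {Ω : Set E} {F : E → ℝ} (h : FlatBound s M Ω F) (hC0 : 0 ≤ C) (hC₁ : 0 ≤ C₁)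
    (hC : RpowDerivBound r s C M Ω F) {x y : E} (hx : x ∈ Ω) (hy : y ∈ Ω)
    (hnear : 0 < F x → (M / F x) ^ (1 / s) * ‖x - y‖ ≤ 1 / 2 →
      ‖rpowSeries r F x (lowFloor (r * s)) - rpowSeries r F y (lowFloor (r * s))‖ ≤
        C₁ * ((M / F x) ^ (1 / s) * ‖x - y‖) ^ (r * s - lowFloor (r * s)) *
          (F x ^ r * ((M / F x) ^ (1 / s)) ^ lowFloor (r * s)))
    (hyx : F y ≤ F x) :
    ‖rpowSeries r F x (lowFloor (r * s)) - rpowSeries r F y (lowFloor (r * s))‖ ≤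
      (C₁ + 4 * C) * (M ^ r * ‖x - y‖ ^ (r * s - lowFloor (r * s))) := by
  have hrs : 0 < r * s := mul_pos hr0 hs
  have hkl : lowFloor (r * s) ≤ lowFloor s := lowFloor_mono (mul_le_of_le_one_left hs.le hr1)
  have hM0 := h.const_nonneg
  have hl := lowFloor_lt hrs
  have hl' := le_lowFloor_add_one (r * s)
  set l := lowFloor (r * s) with hldef
  rcases (h.nonneg x hx).eq_or_lt with hFx | hFx
  · have hFy : F y = 0 := le_antisymm (hyx.trans_eq hFx.symm) (h.nonneg y hy)
    rw [rpowSeries_of_eq_zero hFx.symm, rpowSeries_of_eq_zero hFy, sub_zero, norm_zero]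
    positivity
  have hM : 0 < M := hFx.trans_le (h.le x hx)
  have hscale := rpow_mul_rescale_rpow (r := r) hFx hM hs (norm_nonneg (x - y)) l
  set t := (M / F x) ^ (1 / s) * ‖x - y‖ with ht
  rw [← hscale]
  have hpow := rpow_mul_rescale_pow (s := s) hFx hM r l
  set B := F x ^ r * ((M / F x) ^ (1 / s)) ^ l with hB
  have hB0 : 0 ≤ B := by positivity
  have ht0 : 0 ≤ t := by positivity
  have htσ : 0 ≤ t ^ (r * s - l) * B := by positivity
  rcases le_or_gt t (1 / 2) with hnr | hfar
  · refine (hnear hFx hnr).trans ?_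
    rw [mul_assoc]
    exact mul_le_mul_of_nonneg_right (by linarith) htσ
  · have hx' := hC.norm_rpowSeries_le hC0 h hkl hx
    have hy' : ‖rpowSeries r F y l‖ ≤ C * (M ^ (l / s) * F x ^ (r - l / s)) := by
      refine (hC.norm_rpowSeries_le hC0 h hkl hy).trans ?_
      have h1 := h.nonneg y hy
      have h2 : 0 ≤ r - l / s := by
        rw [sub_nonneg, div_le_iff₀ hs]; exact hl.le
      gcongr
    rw [← hpow] at hx' hy'
    have h1 : 1 ≤ 2 * t ^ (r * s - l) :=
      one_le_two_mul_rpow hfar.le (by linarith) (by linarith)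
    calc _ ≤ C * B + C * B := (norm_sub_le _ _).trans (add_le_add hx' hy')
      _ = 1 * (2 * C * B) := by ring
      _ ≤ 2 * t ^ (r * s - l) * (2 * C * B) := by gcongr
      _ = 4 * C * (t ^ (r * s - l) * B) := by ring
      _ ≤ (C₁ + 4 * C) * (t ^ (r * s - l) * B) :=
        mul_le_mul_of_nonneg_right (by linarith) htσ

theorem le_rpow_mul_rpow_of_le {r s C K M A a : ℝ} (hr0 : 0 < r) (hs : 0 < s) (hC : 1 ≤ C)
    (hK : C ^ (r * s) ≤ K) (hM : 0 ≤ M) (hA : 0 ≤ A) {m : ℕ} (hm : 1 ≤ m)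
    (ha : a ≤ C * (M ^ (m / s) * A ^ (r - m / s))) :
    a ≤ (K * M ^ r) ^ (m / (r * s)) * (A ^ r) ^ (1 - m / (r * s)) := by
  have hrs : 0 < r * s := mul_pos hr0 hs
  have hm1 : (1 : ℝ) ≤ m := by exact_mod_cast hm
  have hK0 : 0 ≤ K := le_trans (by positivity) hK
  have hCK : C ≤ K ^ (m / (r * s)) := by
    calc C ≤ C ^ (m : ℝ) := Real.self_le_rpow_of_one_le hC hm1
      _ = (C ^ (r * s)) ^ (m / (r * s)) := by
          rw [← Real.rpow_mul (by linarith)]; congr 1; field_simp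
      _ ≤ K ^ (m / (r * s)) := by gcongr
  rw [Real.mul_rpow hK0 (by positivity), ← Real.rpow_mul hM, ← Real.rpow_mul hA, mul_assoc]
  have e1 : r * (m / (r * s)) = m / s := by field_simp
  have e2 : r * (1 - m / (r * s)) = r - m / s := by field_simp
  rw [e1, e2]
  exact ha.trans (by gcongr)

theorem exists_flatBound_rpow (E : Type*) [NormedAddCommGroup E] [NormedSpace ℝ E] {r s : ℝ}
    (hr0 : 0 < r) (hr1 : r ≤ 1) (hs : 0 < s) :
    ∃ K : ℝ, 1 ≤ K ∧ ∀ (Ω : Set E), Convex ℝ Ω → IsOpen Ω → ∀ (F : E → ℝ) (M : ℝ),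
      FlatBound s M Ω F → FlatBound (r * s) (K * M ^ r) Ω (fun z => F z ^ r) := by
  have hrs : 0 < r * s := mul_pos hr0 hs
  have hkl : lowFloor (r * s) ≤ lowFloor s := lowFloor_mono (mul_le_of_le_one_left hs.le hr1)
  obtain ⟨C, hC1, hC⟩ := exists_norm_iteratedFDeriv_rpow_comp_le E r s
  have hC0 : 0 ≤ C := by linarith
  obtain ⟨C₁, hC₁, hnear⟩ : ∃ C₁ : ℝ, 0 ≤ C₁ ∧ (1 ≤ lowFloor s → ∀ (Ω : Set E), Convex ℝ Ω →
      IsOpen Ω → ∀ (F : E → ℝ) (M : ℝ), FlatBound s M Ω F → ∀ x ∈ Ω, ∀ y ∈ Ω, 0 < F x →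
      (M / F x) ^ (1 / s) * ‖x - y‖ ≤ 1 / 2 →
      ‖iteratedFDeriv ℝ (lowFloor (r * s)) (fun z => F z ^ r) x -
        iteratedFDeriv ℝ (lowFloor (r * s)) (fun z => F z ^ r) y‖ ≤
        C₁ * ((M / F x) ^ (1 / s) * ‖x - y‖) ^ (r * s - lowFloor (r * s)) *
          (F x ^ r * ((M / F x) ^ (1 / s)) ^ lowFloor (r * s))) := by
    by_cases hk : 1 ≤ lowFloor s
    · obtain ⟨C₁, h0, h1⟩ := exists_norm_iteratedFDeriv_rpow_sub_le_of_near E hr0 hr1 hs hk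
      exact ⟨C₁, h0, fun _ => h1⟩
    · exact ⟨0, le_rfl, fun h => absurd h hk⟩
  have hK1 : 1 ≤ 1 + C ^ (r * s) + (C₁ + 4 * C) := by
    have : 0 ≤ C ^ (r * s) := by positivity
    linarith
  refine ⟨1 + C ^ (r * s) + (C₁ + 4 * C), hK1, fun Ω hconv hΩ F M h => ?_⟩
  have hM := h.const_nonneg
  have hbound : RpowDerivBound r s C M Ω F := fun m hm x hx => hC m hm Ω hΩ F M h x hx
  have hT := h.hasFTaylorSeriesUpToOn_rpow hr0 hr1 hs hconv hΩ hC0 hbound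
  have hMK : M ^ r ≤ (1 + C ^ (r * s) + (C₁ + 4 * C)) * M ^ r :=
    le_mul_of_one_le_left (by positivity) hK1
  refine ⟨by positivity, hT.contDiffOn, fun x hx => Real.rpow_nonneg (h.nonneg x hx) _,
    fun x hx => ?_, fun m hm x hx => ?_, fun x hx y hy => ?_⟩
  · exact (Real.rpow_le_rpow (h.nonneg x hx) (h.le x hx) hr0.le).trans hMK
  · rcases Nat.eq_zero_or_pos m with rfl | hm1
    · simp [abs_of_nonneg (Real.rpow_nonneg (h.nonneg x hx) r)]
    · refine le_rpow_mul_rpow_of_le hr0 hs hC1 (by linarith) hM (h.nonneg x hx) hm1 ?_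
      rw [hT.eq_iteratedFDeriv_of_isOpen hΩ hm hx]
      exact hbound.norm_rpowSeries_le hC0 h (hm.trans hkl) hx
  · by_cases hk : 1 ≤ lowFloor s
    · have hsub : ∀ x ∈ Ω, ∀ y ∈ Ω, F y ≤ F x →
          ‖rpowSeries r F x (lowFloor (r * s)) - rpowSeries r F y (lowFloor (r * s))‖ ≤
            (C₁ + 4 * C) * (M ^ r * ‖x - y‖ ^ (r * s - lowFloor (r * s))) := by
        intro x hx y hy hyx
        refine h.norm_rpowSeries_sub_le hr0 hr1 hs hC0 hC₁ hbound hx hy (fun hFx hn => ?_) hyx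
        rw [← hT.eq_iteratedFDeriv_of_isOpen hΩ le_rfl hx,
          ← hT.eq_iteratedFDeriv_of_isOpen hΩ le_rfl hy]
        exact hnear hk Ω hconv hΩ F M h x hx y hy hFx hn
      rw [hT.eq_iteratedFDeriv_of_isOpen hΩ le_rfl hx,
        hT.eq_iteratedFDeriv_of_isOpen hΩ le_rfl hy, mul_assoc]
      have hle : (C₁ + 4 * C) * (M ^ r * ‖x - y‖ ^ (r * s - lowFloor (r * s))) ≤
          (1 + C ^ (r * s) + (C₁ + 4 * C)) *
            (M ^ r * ‖x - y‖ ^ (r * s - lowFloor (r * s))) := by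
        have : 0 ≤ C ^ (r * s) := by positivity
        exact mul_le_mul_of_nonneg_right (by linarith) (by positivity)
      refine le_trans ?_ hle
      rcases le_total (F y) (F x) with hyx | hyx
      · exact hsub x hx y hy hyx
      · rw [norm_sub_rev, norm_sub_rev x]
        exact hsub y hy x hx hyx
    · have hk0 : lowFloor s = 0 := by lia
      have hl0 : lowFloor (r * s) = 0 := by lia
      have h1 := h.holder x hx y hy
      rw [hk0] at h1
      rw [hl0]
      simp only [iteratedFDeriv_zero_eq_comp, Function.comp_apply, ← map_sub,
        LinearIsometryEquiv.norm_map, Nat.cast_zero, sub_zero, Real.norm_eq_abs] at h1 ⊢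
      calc |F x ^ r - F y ^ r| ≤ |F x - F y| ^ r :=
            abs_rpow_sub_rpow_le (h.nonneg x hx) (h.nonneg y hy) hr0.le hr1
        _ ≤ (M * ‖x - y‖ ^ s) ^ r := by gcongr
        _ = M ^ r * ‖x - y‖ ^ (r * s) := by
            rw [Real.mul_rpow hM (by positivity), ← Real.rpow_mul (norm_nonneg _), mul_comm s]
        _ ≤ _ := by gcongr

/-- Theorem `root`: for `r ∈ (0,1]`, `s > 0`, and a convex open
`Ω ⊆ ℝⁿ`, there is `C = C(n,r,s)` such that for every nonnegative `F ∈ F^s(Ω)`,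
`F^r ∈ F^{rs}(Ω)` and `‖F^r‖_{C^{rs}} ≤ ‖F^r‖_{F^{rs}} ≤ C ‖F‖_{F^s}^r`. -/
theorem statement0 (n : ℕ) (hn : 1 ≤ n) (r s : ℝ) (hr0 : 0 < r) (hr1 : r ≤ 1)
    (hs : 0 < s) :
    ∃ C : ℝ, 0 < C ∧
      ∀ (Ω : Set (EuclideanSpace ℝ (Fin n))), Convex ℝ Ω → IsOpen Ω →
      ∀ F : EuclideanSpace ℝ (Fin n) → ℝ, MemFs s Ω F →
        MemFs (r * s) Ω (fun x => F x ^ r) ∧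
        csNorm (r * s) Ω (fun x => F x ^ r) ≤ fsNorm (r * s) Ω (fun x => F x ^ r) ∧
        fsNorm (r * s) Ω (fun x => F x ^ r) ≤
          ENNReal.ofReal C * (fsNorm s Ω F) ^ r := by
  obtain ⟨K, hK, h⟩ := exists_flatBound_rpow (EuclideanSpace ℝ (Fin n)) hr0 hr1 hs
  refine ⟨3 * K, by linarith, fun Ω hconv hΩ F hF => ?_⟩
  have hrs : 0 < r * s := mul_pos hr0 hs
  have hN : fsNorm s Ω F ≠ ∞ := ENNReal.add_ne_top.2 ⟨hF.1.2, hF.2.2⟩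
  have hG := h Ω hconv hΩ F _ (hF.flatBound hs hΩ)
  refine ⟨hG.memFs hrs hΩ, le_self_add, (hG.fsNorm_le hrs hΩ).trans_eq ?_⟩
  rw [← mul_assoc, ENNReal.ofReal_mul (by linarith),
    ← ENNReal.ofReal_rpow_of_nonneg ENNReal.toReal_nonneg hr0.le, ENNReal.ofReal_toReal hN]

end
end

section
/- Given ε > 0, n ≥ 1, and s > 0, there exists c₀ > 0 depending only on ε, n, s such that for every 0 < c ≤ c₀ the following holds. Let x₀ ∈ ℝⁿ and let P be a real polynomial on ℝⁿ of degree at most ⌊s⌋ with P(x₀) ≥ 0 and M := max_{1≤m<s} (|∇^m P(x₀)|^s / P(x₀)^{s−m})^{1/m} satisfying 0 < M < ∞. Set δ := c (P(x₀)/M)^{1/s}. Then for all x with |x − x₀| < δ and all 0 ≤ m < s, |∇^m P(x) − ∇^m P(x₀)| ≤ ε · M^{m/s} · P(x₀)^{(s−m)/s}; in particular |P(x) − P(x₀)| ≤ ε P(x₀) for all such x. -/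
open Set ENNReal
open scoped NNReal

noncomputable section

variable {E : Type*} [NormedAddCommGroup E] [NormedSpace ℝ E]

/-- If the derivatives of `P` at `x₀` of orders `1, …, D` obey the scale-invariant bounds
`‖∇^m P(x₀)‖ ≤ p / r ^ m` and the derivative of order `D + 1` vanishes, then on the ball of radius
`c * r`, `c ≤ 1`, the derivatives of order at most `D` have oscillation `O(c)` at the same scale. -/
theorem norm_iteratedFDeriv_sub_le_of_scaled_bounds {F : Type*} [NormedAddCommGroup F]
    [NormedSpace ℝ F] {D : ℕ} {P : F → ℝ} (hP : IsPolyDeg D P) {x₀ : F} {p r c : ℝ} (hp : 0 ≤ p)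
    (hr : 0 < r) (hc : 0 < c) (hc1 : c ≤ 1)
    (hbound : ∀ m, 1 ≤ m → m ≤ D → ‖iteratedFDeriv ℝ m P x₀‖ ≤ p / r ^ m)
    (j m : ℕ) (hjm : m + j = D) (x : F) (hx : ‖x - x₀‖ < c * r) :
    ‖iteratedFDeriv ℝ m P x - iteratedFDeriv ℝ m P x₀‖ ≤ c * j * (p / r ^ m) := by
  have hmv : ∀ (m : ℕ) (C : ℝ),
      (∀ y, ‖y - x₀‖ < c * r → ‖iteratedFDeriv ℝ (m + 1) P y‖ ≤ C) →
      ∀ x, ‖x - x₀‖ < c * r →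
        ‖iteratedFDeriv ℝ m P x - iteratedFDeriv ℝ m P x₀‖ ≤ C * ‖x - x₀‖ := by
    intro m C hC x hx
    have hdiff : Differentiable ℝ (iteratedFDeriv ℝ m P) :=
      hP.1.differentiable_iteratedFDeriv (by exact_mod_cast ENat.natCast_lt_top m)
    refine (convex_ball x₀ (c * r)).norm_image_sub_le_of_norm_fderiv_le
      (fun y _ => hdiff y) (fun y hy => ?_) (Metric.mem_ball_self (by positivity)) ?_
    · rw [norm_fderiv_iteratedFDeriv]
      exact hC y (by simpa [dist_eq_norm] using hy)
    · simpa [dist_eq_norm] using hx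
  induction j generalizing m x with
  | zero =>
    obtain rfl : m = D := by omega
    simpa using hmv m 0 (fun y _ => by simp [hP.2 y]) x hx
  | succ j ih =>
    have hA : 0 ≤ p / r ^ (m + 1) := by positivity
    have hC : ∀ y, ‖y - x₀‖ < c * r →
        ‖iteratedFDeriv ℝ (m + 1) P y‖ ≤ (1 + j) * (p / r ^ (m + 1)) := by
      intro y hy
      have hosc := ih (m + 1) (by omega) y hy
      have hx₀ := hbound (m + 1) (by omega) (by omega)
      have htri := norm_le_norm_add_norm_sub' (iteratedFDeriv ℝ (m + 1) P y)
        (iteratedFDeriv ℝ (m + 1) P x₀)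
      have hcj : c * j * (p / r ^ (m + 1)) ≤ j * (p / r ^ (m + 1)) := by
        gcongr
        exact mul_le_of_le_one_left (by positivity) hc1
      linarith
    calc ‖iteratedFDeriv ℝ m P x - iteratedFDeriv ℝ m P x₀‖
        ≤ (1 + j) * (p / r ^ (m + 1)) * ‖x - x₀‖ := hmv m _ hC x hx
      _ ≤ (1 + j) * (p / r ^ (m + 1)) * (c * r) := by gcongr
      _ = c * ((j + 1 : ℕ) : ℝ) * (p / r ^ m) := by
        push_cast
        field_simp
        ring

/-- The scale `r = (p / M) ^ (1 / s)` turns `M ^ (m / s) * p ^ ((s - m) / s)` into `p / r ^ m`. -/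
theorem rpow_mul_rpow_eq_div_scale_pow {p M s : ℝ} (hp : 0 < p) (hM : 0 < M) (hs : 0 < s)
    (m : ℕ) :
    M ^ ((m : ℝ) / s) * p ^ ((s - m) / s) = p / ((p / M) ^ (1 / s)) ^ m := by
  rw [← Real.rpow_natCast, ← Real.rpow_mul (by positivity), Real.div_rpow hp.le hM.le,
    sub_div, div_self hs.ne', Real.rpow_sub hp, Real.rpow_one, one_div_mul_eq_div]
  have := Real.rpow_pos_of_pos hp ((m : ℝ) / s)
  have := Real.rpow_pos_of_pos hM ((m : ℝ) / s)
  field_simp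

/-- Finiteness of the flatness quantity at a point where `P` is positive bounds each derivative. -/
theorem norm_iteratedFDeriv_le_of_jetFlatAt {F : Type*} [NormedAddCommGroup F]
    [NormedSpace ℝ F] {s : ℝ} (hs : 0 < s) {P : F → ℝ} {x₀ : F} (hp : 0 < P x₀)
    (hfin : jetFlatAt s P x₀ ≠ ∞) {m : ℕ} (h1 : 1 ≤ m) (hm : m ≤ lowFloor s) :
    ‖iteratedFDeriv ℝ m P x₀‖ ≤
      (jetFlatAt s P x₀).toReal ^ ((m : ℝ) / s) * P x₀ ^ ((s - m) / s) := by
  have hm0 : (0 : ℝ) < m := by exact_mod_cast h1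
  have hle : ((‖iteratedFDeriv ℝ m P x₀‖₊ : ℝ≥0∞) ^ s
      / ENNReal.ofReal (P x₀) ^ (s - (m : ℝ))) ^ (1 / (m : ℝ)) ≤ jetFlatAt s P x₀ :=
    le_iSup_of_le m (le_iSup_of_le h1 (le_iSup_of_le hm le_rfl))
  have hreal := ENNReal.toReal_mono hfin hle
  rw [← ENNReal.toReal_rpow, ENNReal.toReal_div, ← ENNReal.toReal_rpow, ← ENNReal.toReal_rpow,
    ENNReal.toReal_ofReal hp.le, ENNReal.coe_toReal, coe_nnnorm] at hreal
  set a := ‖iteratedFDeriv ℝ m P x₀‖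
  set M := (jetFlatAt s P x₀).toReal
  have ha : 0 ≤ a := norm_nonneg _
  have hM : 0 ≤ M := ENNReal.toReal_nonneg
  have hq : 0 < P x₀ ^ (s - (m : ℝ)) := Real.rpow_pos_of_pos hp _
  rw [one_div, Real.rpow_inv_le_iff_of_pos (by positivity) hM hm0, div_le_iff₀ hq] at hreal
  have hroot := (Real.le_rpow_inv_iff_of_pos ha (by positivity) hs).2 hreal
  rwa [Real.mul_rpow (by positivity) hq.le, ← Real.rpow_mul hM, ← Real.rpow_mul hp.le,
    ← div_eq_mul_inv, ← div_eq_mul_inv] at hroot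

/-- Lemma `locally constant`(A): given `ε > 0` there is
`c₀ = c₀(ε,n,s) > 0` such that for `0 < c ≤ c₀`, every polynomial `P` of degree
at most `⌊s⌋` with `P(x₀) ≥ 0` and `0 < M < ∞` (where `M` is the pointwise
flatness quantity) satisfies
`|∇^m P(x) − ∇^m P(x₀)| ≤ ε M^{m/s} P(x₀)^{(s−m)/s}` for `|x − x₀| < c (P(x₀)/M)^{1/s}`,
and in particular `|P(x) − P(x₀)| ≤ ε P(x₀)`. -/
theorem statement6 (ε : ℝ) (hε : 0 < ε) (n : ℕ) (hn : 1 ≤ n) (s : ℝ) (hs : 0 < s) :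
    ∃ c₀ : ℝ, 0 < c₀ ∧
      ∀ c : ℝ, 0 < c → c ≤ c₀ →
      ∀ (x₀ : EuclideanSpace ℝ (Fin n)) (P : EuclideanSpace ℝ (Fin n) → ℝ),
        IsPolyDeg (lowFloor s) P → 0 ≤ P x₀ →
        0 < jetFlatAt s P x₀ → jetFlatAt s P x₀ ≠ ∞ →
      ∀ x : EuclideanSpace ℝ (Fin n),
        ‖x - x₀‖ < c * (P x₀ / (jetFlatAt s P x₀).toReal) ^ (1 / s) →
        (∀ m ≤ lowFloor s,
          ‖iteratedFDeriv ℝ m P x - iteratedFDeriv ℝ m P x₀‖ ≤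
            ε * (jetFlatAt s P x₀).toReal ^ ((m : ℝ) / s)
              * (P x₀) ^ ((s - (m : ℝ)) / s)) ∧
        |P x - P x₀| ≤ ε * P x₀ := by
  set D := lowFloor s
  refine ⟨min 1 (ε / (D + 1)), by positivity, ?_⟩
  intro c hc hcc x₀ P hP hp0 hpos hfin x hx
  have hM : 0 < (jetFlatAt s P x₀).toReal := ENNReal.toReal_pos hpos.ne' hfin
  have hp : 0 < P x₀ := by
    refine hp0.lt_of_ne' fun h0 => ?_
    rw [h0, zero_div, Real.zero_rpow (by positivity), mul_zero] at hx
    exact (norm_nonneg _).not_gt hx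
  have hr : 0 < (P x₀ / (jetFlatAt s P x₀).toReal) ^ (1 / s) :=
    Real.rpow_pos_of_pos (by positivity) _
  have hmain : ∀ m ≤ D, ‖iteratedFDeriv ℝ m P x - iteratedFDeriv ℝ m P x₀‖ ≤
      ε * (jetFlatAt s P x₀).toReal ^ ((m : ℝ) / s) * (P x₀) ^ ((s - (m : ℝ)) / s) := by
    intro m hm
    have hosc := norm_iteratedFDeriv_sub_le_of_scaled_bounds hP hp0 hr hc
      (hcc.trans (min_le_left _ _))
      (fun k h1 hk => (norm_iteratedFDeriv_le_of_jetFlatAt hs hp hfin h1 hk).trans_eq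
        (rpow_mul_rpow_eq_div_scale_pow hp hM hs k))
      (D - m) m (by omega) x hx
    rw [mul_assoc, rpow_mul_rpow_eq_div_scale_pow hp hM hs m]
    refine hosc.trans (mul_le_mul_of_nonneg_right ?_ (by positivity))
    have hDm : ((D - m : ℕ) : ℝ) ≤ D + 1 := by
      exact_mod_cast (Nat.sub_le D m).trans (Nat.le_succ D)
    calc c * ((D - m : ℕ) : ℝ) ≤ ε / (D + 1) * (D + 1) :=
          mul_le_mul (hcc.trans (min_le_right _ _)) hDm (by positivity) (by positivity)
      _ = ε := div_mul_cancel₀ _ (by positivity)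
  refine ⟨hmain, ?_⟩
  have h0 := hmain 0 (Nat.zero_le _)
  have hnorm : |P x - P x₀| = ‖iteratedFDeriv ℝ 0 P x - iteratedFDeriv ℝ 0 P x₀‖ := by
    simp only [iteratedFDeriv_zero_eq_comp, Function.comp_apply, ← map_sub,
      LinearIsometryEquiv.norm_map, Real.norm_eq_abs]
  rw [hnorm]
  simpa [div_self hs.ne'] using h0

end
end

section
/- Let s ∈ (1,2], let x₀ ∈ ℝⁿ, and let P be an affine polynomial on ℝⁿ with P(x₀) > 0 and ∇P ≠ 0. Set δ := P(x₀)/|∇P|. Then for every λ > 1 and every nonnegative F ∈ C^s(B(x₀, λδ)) whose 1-jet at x₀ equals P (i.e., F(x₀) = P(x₀) and ∇F(x₀) = ∇P), one has ‖F‖_{Ċ^s(B(x₀,λδ))} ≥ (s(λ−1)/λ^s) · |∇P|^s / P(x₀)^{s−1}. -/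
open Set ENNReal
open scoped NNReal

noncomputable section

variable {E : Type*} [NormedAddCommGroup E] [NormedSpace ℝ E]

theorem lowFloor_eq_one {s : ℝ} (hs1 : 1 < s) (hs2 : s ≤ 2) : lowFloor s = 1 := by
  have h : ⌈s⌉₊ = 2 := by
    rw [Nat.ceil_eq_iff (by norm_num)]
    norm_num
    exact ⟨hs1, hs2⟩
  simp [lowFloor, h]

/-- The Hölder seminorm controls the oscillation of directional derivatives. -/
theorem abs_fderivWithin_sub_le_holderSemi {s : ℝ} (hs1 : 1 < s) (hs2 : s ≤ 2) {Ω : Set E}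
    (hΩ : UniqueDiffOn ℝ Ω) {F : E → ℝ} (hfin : holderSemi s Ω F ≠ ∞) {x y : E}
    (hx : x ∈ Ω) (hy : y ∈ Ω) (hxy : x ≠ y) (u : E) :
    |fderivWithin ℝ F Ω x u - fderivWithin ℝ F Ω y u| ≤
      (holderSemi s Ω F).toReal * ‖x - y‖ ^ (s - 1) * ‖u‖ := by
  have hpos : 0 < ‖x - y‖ ^ (s - 1) :=
    Real.rpow_pos_of_pos (norm_pos_iff.mpr (sub_ne_zero.mpr hxy)) _
  have hle : (‖iteratedFDerivWithin ℝ 1 F Ω x - iteratedFDerivWithin ℝ 1 F Ω y‖₊ : ℝ≥0∞)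
      / ENNReal.ofReal (‖x - y‖ ^ (s - 1)) ≤ holderSemi s Ω F := by
    rw [holderSemi, lowFloor_eq_one hs1 hs2, Nat.cast_one]
    exact le_iSup₂_of_le x hx (le_iSup₂_of_le y hy (le_iSup_of_le hxy le_rfl))
  have hnorm : ‖iteratedFDerivWithin ℝ 1 F Ω x - iteratedFDerivWithin ℝ 1 F Ω y‖ ≤
      (holderSemi s Ω F).toReal * ‖x - y‖ ^ (s - 1) := by
    have h := ENNReal.toReal_mono hfin hle
    rw [ENNReal.toReal_div, ENNReal.toReal_ofReal hpos.le, div_le_iff₀ hpos] at h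
    simpa using h
  have hop := (iteratedFDerivWithin ℝ 1 F Ω x
    - iteratedFDerivWithin ℝ 1 F Ω y).le_opNorm (fun _ => u)
  rw [sub_apply, iteratedFDerivWithin_one_apply (hΩ x hx),
    iteratedFDerivWithin_one_apply (hΩ y hy), Real.norm_eq_abs] at hop
  simp only [Finset.univ_unique, Finset.prod_const, Finset.card_singleton, pow_one] at hop
  exact hop.trans (by gcongr)

/-- A function on `[0, R)` that starts at `a` with slope `-b` and is nonnegative forces a lower
bound on the one-sided Hölder constant `M` of its derivative. -/
theorem le_of_nonneg_of_deriv_le {s a b M R : ℝ} (hs : 1 < s) (hR : 0 < R) {g g' : ℝ → ℝ}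
    (hg : ∀ t ∈ Ico 0 R, HasDerivAt g (g' t) t) (hg0 : g 0 = a)
    (hnonneg : ∀ t ∈ Ico 0 R, 0 ≤ g t)
    (hg' : ∀ t ∈ Ioo 0 R, g' t ≤ -b + M * t ^ (s - 1)) :
    b * R - a ≤ M * R ^ s / s := by
  have hs0 : s ≠ 0 := by linarith
  have hpow (t : ℝ) : HasDerivAt (fun t : ℝ => a - b * t + M * t ^ s / s)
      (-b + M * t ^ (s - 1)) t := by
    have h := ((((hasDerivAt_id t).const_mul b).const_sub a).add
      (((Real.hasDerivAt_rpow_const (Or.inr hs.le) : HasDerivAt _ _ t).const_mul M).div_const s))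
    refine h.congr_deriv ?_
    field_simp
  have hmono : MonotoneOn (fun t => (a - b * t + M * t ^ s / s) - g t) (Ico 0 R) := by
    refine monotoneOn_of_hasDerivWithinAt_nonneg (convex_Ico 0 R)
      (fun t ht => ((hpow t).sub (hg t ht)).continuousAt.continuousWithinAt)
      (fun t ht => ((hpow t).sub (hg t (interior_subset ht))).hasDerivWithinAt) ?_
    intro t ht
    rw [interior_Ico] at ht
    linarith [hg' t ht]
  have hbound : ∀ t ∈ Ico 0 R, 0 ≤ a - b * t + M * t ^ s / s := by
    intro t ht
    have h := hmono (left_mem_Ico.mpr hR) ht ht.1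
    simp only [hg0, Real.zero_rpow hs0, mul_zero, zero_div] at h
    linarith [hnonneg t ht]
  have hlim : 0 ≤ a - b * R + M * R ^ s / s := by
    refine ge_of_tendsto ((hpow R).continuousAt.tendsto.mono_left
      (nhdsWithin_le_nhds (s := Iio R))) ?_
    filter_upwards [Ico_mem_nhdsLT hR] with t ht using hbound t ht
  linarith

/-- Proposition `c2`, first part: for `s ∈ (1,2]`, an affine
polynomial `P(x) = a + ⟪v, x − x₀⟫` with `P(x₀) = a > 0` and `∇P = v ≠ 0`, and
`δ := a/|v|`: for every `λ > 1` and nonnegative `F ∈ C^s(B(x₀,λδ))` whose 1-jet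
at `x₀` is `P`, one has
`‖F‖_{Ċ^s(B(x₀,λδ))} ≥ (s(λ−1)/λ^s) |v|^s / a^{s−1}`. -/
theorem statement8 (n : ℕ) (hn : 1 ≤ n) (s : ℝ) (hs1 : 1 < s) (hs2 : s ≤ 2)
    (x₀ : EuclideanSpace ℝ (Fin n)) (a : ℝ) (ha : 0 < a)
    (v : EuclideanSpace ℝ (Fin n)) (hv : v ≠ 0) (lam : ℝ) (hlam : 1 < lam)
    (F : EuclideanSpace ℝ (Fin n) → ℝ)
    (hF : MemCs s (Metric.ball x₀ (lam * (a / ‖v‖))) F)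
    (hFnonneg : ∀ x ∈ Metric.ball x₀ (lam * (a / ‖v‖)), 0 ≤ F x)
    (hjet0 : F x₀ = a)
    (hjet1 : fderivWithin ℝ F (Metric.ball x₀ (lam * (a / ‖v‖))) x₀
      = innerSL ℝ v) :
    ENNReal.ofReal (s * (lam - 1) / lam ^ s * (‖v‖ ^ s / a ^ (s - 1))) ≤
      holderSemi s (Metric.ball x₀ (lam * (a / ‖v‖))) F := by
  set R := lam * (a / ‖v‖) with hRdef
  have hv0 : 0 < ‖v‖ := norm_pos_iff.mpr hv
  have hlam0 : 0 < lam := by linarith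
  have hR : 0 < R := by positivity
  obtain ⟨hcd, hnorm⟩ := hF
  have hfin : holderSemi s (Metric.ball x₀ R) F ≠ ∞ := (ENNReal.add_ne_top.mp hnorm).2
  rw [lowFloor_eq_one hs1 hs2] at hcd
  have hdiff : DifferentiableOn ℝ F (Metric.ball x₀ R) := hcd.differentiableOn (by simp)
  set M := (holderSemi s (Metric.ball x₀ R) F).toReal with hM
  set u : EuclideanSpace ℝ (Fin n) := -(‖v‖⁻¹ • v) with hu
  have hunorm : ‖u‖ = 1 := by
    rw [hu, norm_neg, norm_smul, norm_inv, norm_norm, inv_mul_cancel₀ hv0.ne']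
  have hdist (t : ℝ) : ‖x₀ + t • u - x₀‖ = |t| := by
    simp [norm_smul, hunorm]
  have hmem : ∀ t ∈ Ico 0 R, x₀ + t • u ∈ Metric.ball x₀ R := by
    intro t ht
    rw [mem_ball_iff_norm, hdist, abs_of_nonneg ht.1]
    exact ht.2
  have hline (t : ℝ) : HasDerivAt (fun t : ℝ => x₀ + t • u) u t := by
    simpa using ((hasDerivAt_id t).smul_const u).const_add x₀
  have hbase : fderivWithin ℝ F (Metric.ball x₀ R) x₀ u = -‖v‖ := by
    rw [hjet1, innerSL_apply_apply, hu, inner_neg_right, real_inner_smul_right,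
      real_inner_self_eq_norm_sq]
    field_simp
  have key : ‖v‖ * R - a ≤ M * R ^ s / s := by
    refine le_of_nonneg_of_deriv_le hs1 hR (g := fun t => F (x₀ + t • u))
      (g' := fun t => fderivWithin ℝ F (Metric.ball x₀ R) (x₀ + t • u) u) ?_
      (by simp [hjet0]) (fun t ht => hFnonneg _ (hmem t ht)) ?_
    · intro t ht
      have hnhds := Metric.isOpen_ball.mem_nhds (hmem t ht)
      exact ((hdiff _ (hmem t ht)).hasFDerivWithinAt.hasFDerivAt hnhds).comp_hasDerivAt t (hline t)
    · intro t ht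
      have hne : x₀ + t • u ≠ x₀ := by
        rw [← sub_ne_zero, ← norm_pos_iff, hdist, abs_of_pos ht.1]
        exact ht.1
      have h := abs_fderivWithin_sub_le_holderSemi hs1 hs2 Metric.isOpen_ball.uniqueDiffOn hfin
        (hmem t (Ioo_subset_Ico_self ht)) (Metric.mem_ball_self hR) hne u
      rw [hdist, abs_of_pos ht.1, hunorm, mul_one, hbase, ← hM] at h
      linarith [le_abs_self (fderivWithin ℝ F (Metric.ball x₀ R) (x₀ + t • u) u - -‖v‖)]
  refine ENNReal.ofReal_le_of_le_toReal ?_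
  have hvR : ‖v‖ * R - a = (lam - 1) * a := by
    rw [hRdef]
    field_simp
  have hRs : R ^ s = lam ^ s * (a ^ s / ‖v‖ ^ s) := by
    rw [hRdef, Real.mul_rpow hlam0.le (by positivity), Real.div_rpow ha.le hv0.le]
  have has : a ^ (s - 1) = a ^ s / a := by
    rw [Real.rpow_sub_one ha.ne']
  rw [hvR, le_div_iff₀ (by linarith), ← div_le_iff₀ (by positivity), hRs] at key
  refine le_of_eq_of_le ?_ key
  rw [has]
  field_simp

end
end
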